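/- arXiv:1809.07736 — 2 statements merged into one kernel-verified Lean document; each statement's English description precedes it below -/
import Mathlib

section
/- There exists a constant c > 0 such that the following holds. Suppose G, H, W, k, n satisfy Assumption (★) with constant c. Then for every integer p ≥ 1 and every positive integer x with a_p·x ≤ k, every simple arc-system 𝒜 in G of length at least a_p·x and size at least b_p·x^{p(p−1)/2} is such that G[𝒜] contains an independent set of size at least x^p + 1. -/
open Finset

/-- `σ` lists the vertices of `G` in the order of a Hamilton cycle `H`:
it is a bijection from `ZMod n` such that consecutive indices give adjacent vertices. -/
def IsHamOrder {V : Type} [Fintype V] (G : SimpleGraph V) (n : ℕ) (σ : ZMod n → V) : Prop :=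
  Function.Bijective σ ∧ ∀ i : ZMod n, G.Adj (σ i) (σ (i + 1))

/-- A vertex is problematic if it has degree at most `2k` or belongs to `W`. -/
def Problematic {V : Type} [Fintype V] [DecidableEq V] (G : SimpleGraph V)
    [DecidableRel G.Adj] (W : Finset V) (k : ℕ) (v : V) : Prop :=
  G.degree v ≤ 2 * k ∨ v ∈ W

/-- `G` has a cycle of length `ℓ` passing through all vertices of `S`. -/
def HasCycleThrough {V : Type} (G : SimpleGraph V) (ℓ : ℕ) (S : Set V) : Prop :=
  ∃ (u : V) (w : G.Walk u u), w.IsCycle ∧ w.length = ℓ ∧ ∀ x ∈ S, x ∈ w.support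

/-- Assumption (★) with constant `c`: `G` is a graph on `n` vertices with Hamilton cycle
(order) `σ`, independence number at most `k`, `W` has at most `20k²` vertices, `G` has no
cycle of length `n − 1` through all of `W`, and `n ≥ c·k^(11/5)`. -/
def StarAssumption {V : Type} [Fintype V] [DecidableEq V] (G : SimpleGraph V) [DecidableRel G.Adj]
    (n k : ℕ) (σ : ZMod n → V) (W : Finset V) (c : ℝ) : Prop :=
  Fintype.card V = n ∧ IsHamOrder G n σ ∧
  (∀ s : Finset V, (∀ u ∈ s, ∀ v ∈ s, u ≠ v → ¬ G.Adj u v) → s.card ≤ k) ∧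
  W.card ≤ 20 * k ^ 2 ∧
  ¬ HasCycleThrough G (n - 1) (W : Set V) ∧
  c * (k : ℝ) ^ ((11 : ℝ) / 5) ≤ (n : ℝ)

/-- Two vertices are consecutive if they are neighbours on the Hamilton cycle. -/
def Consec {V : Type} (n : ℕ) (σ : ZMod n → V) (u v : V) : Prop :=
  ∃ i : ZMod n, (σ i = u ∧ σ (i + 1) = v) ∨ (σ i = v ∧ σ (i + 1) = u)

/-- A continuous set of vertices: one forming a subpath (interval) of the Hamilton cycle. -/
def ContinuousSet {V : Type} [DecidableEq V] (n : ℕ) (σ : ZMod n → V) (S : Finset V) : Prop :=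
  ∃ (i : ZMod n) (m : ℕ), S = (Finset.range m).image (fun j : ℕ => σ (i + (j : ZMod n)))

/-- `B` is a continuous closure of `A`: a minimum-size continuous set containing `A`. -/
def IsClosure {V : Type} [DecidableEq V] (n : ℕ) (σ : ZMod n → V) (A B : Finset V) : Prop :=
  ContinuousSet n σ B ∧ A ⊆ B ∧
    ∀ B' : Finset V, ContinuousSet n σ B' → A ⊆ B' → B.card ≤ B'.card

/-- An arc-system: a family of arcs together with a choice of continuous closure for each
arc, such that closures of distinct arcs are disjoint, closures contain no problematic
vertex, and no arc contains two consecutive vertices. -/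
structure ArcSystem {V : Type} [Fintype V] [DecidableEq V] (G : SimpleGraph V)
    [DecidableRel G.Adj] (n k : ℕ) (σ : ZMod n → V) (W : Finset V) where
  arcs : Finset (Finset V)
  cl : Finset V → Finset V
  closure_spec : ∀ A ∈ arcs, IsClosure n σ A (cl A)
  closures_disjoint : ∀ A ∈ arcs, ∀ B ∈ arcs, A ≠ B → Disjoint (cl A) (cl B)
  no_problematic : ∀ A ∈ arcs, ∀ v ∈ cl A, ¬ Problematic G W k v
  no_consec : ∀ A ∈ arcs, ∀ u ∈ A, ∀ v ∈ A, u ≠ v → ¬ Consec n σ u v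

namespace ArcSystem

variable {V : Type} [Fintype V] [DecidableEq V] {G : SimpleGraph V} [DecidableRel G.Adj]
  {n k : ℕ} {σ : ZMod n → V} {W : Finset V}

/-- An arc-system is independent if every closure has at most `k` vertices. -/
def Independent (𝒜 : ArcSystem G n k σ W) : Prop :=
  ∀ A ∈ 𝒜.arcs, (𝒜.cl A).card ≤ k

/-- Every arc of the system has at least `l` vertices. -/
def LengthGe (𝒜 : ArcSystem G n k σ W) (l : ℕ) : Prop :=
  ∀ A ∈ 𝒜.arcs, l ≤ A.card

end ArcSystem

/-- A vertex set `s` is `M₂`-free (for `G`) if the subgraph induced by `s`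
contains no two vertex-disjoint edges. -/
def M2Free {V : Type} (G : SimpleGraph V) (s : Finset V) : Prop :=
  ¬ ∃ a b x y : V, a ∈ s ∧ b ∈ s ∧ x ∈ s ∧ y ∈ s ∧ G.Adj a b ∧ G.Adj x y ∧
      a ≠ x ∧ a ≠ y ∧ b ≠ x ∧ b ≠ y

namespace ArcSystem

variable {V : Type} [Fintype V] [DecidableEq V] {G : SimpleGraph V} [DecidableRel G.Adj]
  {n k : ℕ} {σ : ZMod n → V} {W : Finset V}

/-- An arc-system is simple if it is independent and any two distinct arcs induce an
`M₂`-free subgraph of `G`. -/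
def Simple (𝒜 : ArcSystem G n k σ W) : Prop :=
  𝒜.Independent ∧ ∀ A ∈ 𝒜.arcs, ∀ B ∈ 𝒜.arcs, A ≠ B → M2Free G (A ∪ B)

end ArcSystem

/-- `G[𝒜]` contains an independent set of size at least `m`. -/
def HasIndepInArcs {V : Type} [Fintype V] [DecidableEq V] (G : SimpleGraph V)
    [DecidableRel G.Adj] {n k : ℕ} {σ : ZMod n → V} {W : Finset V}
    (𝒜 : ArcSystem G n k σ W) (m : ℕ) : Prop :=
  ∃ I : Finset V, (∀ v ∈ I, ∃ A ∈ 𝒜.arcs, v ∈ A) ∧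
    (∀ u ∈ I, ∀ v ∈ I, u ≠ v → ¬ G.Adj u v) ∧ m ≤ I.card

/-- The constants `a_p = 10·3^p`. -/
def aP (p : ℕ) : ℕ := 10 * 3 ^ p

/-- The constants `b_p = 1000^p·4^(p²)`. -/
def bP (p : ℕ) : ℕ := 1000 ^ p * 4 ^ (p ^ 2)


def Cyc {V : Type} (G : SimpleGraph V) (l : List V) : Prop :=
  l.Nodup ∧ l.IsChain G.Adj ∧ ∀ x ∈ l.getLast?, ∀ y ∈ l.head?, G.Adj x y

lemma cyc_absorb {V : Type} {G : SimpleGraph V} (X Y Z : List V) (v : V)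
    (hX : X ≠ []) (hY : Y ≠ []) (hZ : Z ≠ []) (hc : Cyc G (X ++ (Y ++ Z)))
    (hv : v ∉ X ++ (Y ++ Z)) (h1 : ∀ x ∈ X.getLast?, G.Adj x v)
    (h2 : ∀ y ∈ Y.getLast?, G.Adj v y) (h3 : ∀ y ∈ Y.head?, ∀ z ∈ Z.head?, G.Adj y z) :
    Cyc G (X ++ v :: (Y.reverse ++ Z)) := by
  obtain ⟨hn, hch, hl⟩ := hc
  refine ⟨?_, ?_, ?_⟩
  · have : (X ++ v :: (Y.reverse ++ Z)).Perm (v :: (X ++ (Y ++ Z))) := by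
      refine List.perm_middle.trans ?_
      refine List.Perm.cons _ ?_
      exact List.Perm.append_left _ (List.Perm.append_right _ (List.reverse_perm Y))
    rw [this.nodup_iff]
    exact List.nodup_cons.2 ⟨hv, hn⟩
  · rw [List.isChain_append] at hch
    obtain ⟨ha, hb, hcc⟩ := hch
    rw [List.isChain_append] at hb
    obtain ⟨hb1, hb2, hb3⟩ := hb
    rw [List.isChain_append]
    refine ⟨ha, ?_, ?_⟩
    · rw [List.isChain_cons]
      refine ⟨?_, ?_⟩
      · intro y hy
        apply h2
        rw [List.head?_append] at hy
        have : Y.reverse ≠ [] := by simpa using hY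
        obtain ⟨w, W, hw⟩ := List.exists_cons_of_ne_nil this
        rw [hw] at hy
        have h : Y = W.reverse ++ [w] := by
          rw [← List.reverse_reverse Y, hw]; simp
        simp at hy
        rw [h]; simp [hy]
      · rw [List.isChain_append]
        refine ⟨?_, hb2, ?_⟩
        · rw [List.isChain_reverse]
          exact hb1.imp (fun a b h => h.symm)
        · intro x hx y hy
          rw [List.getLast?_reverse] at hx
          exact h3 x hx y hy
    · intro x hx y hy
      simp at hy
      subst hy
      exact h1 x hx
  · intro x hx y hy
    apply hl
    · obtain ⟨z, Z', rfl⟩ := List.exists_cons_of_ne_nil hZ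
      simp [List.getLast?_append, List.getLast?_cons] at hx ⊢
      exact hx
    · obtain ⟨z, Z', rfl⟩ := List.exists_cons_of_ne_nil hX
      simpa using hy

lemma cyc_to_walk {V : Type} {G : SimpleGraph V} (l : List V) (h : Cyc G l) (h3 : 3 ≤ l.length)
    (S : Set V) (hS : ∀ x ∈ S, x ∈ l) : HasCycleThrough G l.length S := by
  obtain ⟨hn, hch, hl⟩ := h
  match l, h3 with
  | a :: t, h3 =>
    have hne : a :: t ≠ [] := by simp
    set w := SimpleGraph.Walk.ofSupport (a :: t) hne hch with hw
    have hadj : G.Adj ((a :: t).getLast hne) ((a :: t).head hne) := by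
      apply hl
      · simp [List.getLast?_eq_some_getLast]
      · simp
    have hsupp : w.support = a :: t := SimpleGraph.Walk.support_ofSupport _ _
    have hlen : w.length + 1 = t.length + 1 := by
      rw [← SimpleGraph.Walk.length_support, hsupp]; simp
    have hp : w.IsPath := by
      rw [SimpleGraph.Walk.isPath_def, hsupp]; exact hn
    refine ⟨_, SimpleGraph.Walk.cons hadj w, ?_, ?_, ?_⟩
    · rw [SimpleGraph.Walk.cons_isCycle_iff]
      refine ⟨hp, ?_⟩
      intro he
      have := hp.length_eq_one_of_mem_edges (by rw [Sym2.eq_swap]; exact he)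
      simp only [List.length_cons] at h3
      omega
    · simp only [SimpleGraph.Walk.length_cons, List.length_cons]
      omega
    · intro x hx
      rw [SimpleGraph.Walk.support_cons, hsupp]
      exact List.mem_cons_of_mem _ (hS x hx)

lemma absorb {V : Type} [Fintype V] [DecidableEq V] {G : SimpleGraph V} [DecidableRel G.Adj]
    (k : ℕ) (hα : ∀ s : Finset V, (∀ u ∈ s, ∀ v ∈ s, u ≠ v → ¬ G.Adj u v) → s.card ≤ k)
    (l : List V) (hc : Cyc G l) (v : V) (hv : v ∉ l) (hd : 2 * k < G.degree v)
    (hM : (univ \ l.toFinset).card ≤ k) :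
    ∃ l', Cyc G l' ∧ l'.toFinset = insert v l.toFinset := by
  classical
  set m := l.length with hm
  set f : ℕ → V := fun i => l.getD i v with hf
  have hfi : ∀ i, (h : i < m) → f i = l[i] := by
    intro i h; simp only [hf]; exact List.getD_eq_getElem _ _ h
  have hfinj : ∀ i j, i < m → j < m → f i = f j → i = j := by
    intro i j hi hj h
    rw [hfi i hi, hfi j hj] at h
    exact (hc.1.getElem_inj_iff).1 h
  set I := (range (m - 1)).filter (fun i => G.Adj v (f i)) with hI
  have hcard : k + 1 ≤ I.card := by
    have hsub : G.neighborFinset v ⊆ (univ \ l.toFinset).erase v ∪ insert (f (m-1)) (I.image f) := by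
      intro w hw
      rw [SimpleGraph.mem_neighborFinset] at hw
      by_cases hwl : w ∈ l
      · apply mem_union_right
        obtain ⟨i, hi, rfl⟩ := List.getElem_of_mem hwl
        rw [mem_insert]
        by_cases h : i = m - 1
        · left; rw [← hfi i hi, h]
        · right
          rw [mem_image]
          refine ⟨i, ?_, hfi i hi⟩
          rw [hI, mem_filter, mem_range, hfi i hi]
          exact ⟨by omega, hw⟩
      · apply mem_union_left
        simp [hwl, hw.ne']
    have h1 := (card_le_card hsub).trans (card_union_le _ _)
    have h2 : (insert (f (m-1)) (I.image f)).card ≤ I.card + 1 :=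
      (card_insert_le _ _).trans (by have := card_image_le (s := I) (f := f); omega)
    have h3 : ((univ \ l.toFinset).erase v).card = (univ \ l.toFinset).card - 1 :=
      card_erase_of_mem (by simp [hv])
    have h4 : 0 < (univ \ l.toFinset).card := card_pos.2 ⟨v, by simp [hv]⟩
    rw [SimpleGraph.card_neighborFinset_eq_degree] at h1
    omega
  have hIm : ∀ i ∈ I, i + 1 < m ∧ G.Adj v (f i) := by
    intro i hi
    rw [hI, mem_filter, mem_range] at hi
    exact ⟨by omega, hi.2⟩
  have hexist : ∃ i ∈ I, ∃ j ∈ I, i < j ∧ G.Adj (f (i+1)) (f (j+1)) := by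
    by_contra hcon
    push Not at hcon
    have h1 := hα (I.image (fun i => f (i+1))) (by
      intro a ha b hb hab hadj
      rw [mem_image] at ha hb
      obtain ⟨i, hi, rfl⟩ := ha
      obtain ⟨j, hj, rfl⟩ := hb
      rcases lt_trichotomy i j with h | h | h
      · exact hcon i hi j hj h hadj
      · subst h; exact hab rfl
      · exact hcon j hj i hi h hadj.symm)
    rw [card_image_of_injOn] at h1
    · omega
    · intro i hi j hj h
      have := hfinj (i+1) (j+1) (hIm i hi).1 (hIm j hj).1 h
      omega
  obtain ⟨i, hi, j, hj, hij, hadj⟩ := hexist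
  obtain ⟨him, hvi⟩ := hIm i hi
  obtain ⟨hjm, hvj⟩ := hIm j hj
  set X := l.take (i+1) with hX
  set Y := (l.drop (i+1)).take (j-i) with hY
  set Z := l.drop (j+1) with hZ
  have hsplit : l = X ++ (Y ++ Z) := by
    have : Z = (l.drop (i+1)).drop (j-i) := by
      rw [List.drop_drop, hZ]; congr 1; omega
    rw [this, hY, List.take_append_drop, hX, List.take_append_drop]
  have hXl : X.length = i + 1 := by rw [hX, List.length_take]; omega
  have hYl : Y.length = j - i := by rw [hY, List.length_take, List.length_drop]; omega
  have hZl : Z.length = m - (j + 1) := by rw [hZ, List.length_drop]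
  have key := cyc_absorb X Y Z v (by intro h; rw [h] at hXl; simp at hXl)
    (by intro h; rw [h] at hYl; simp at hYl; omega) (by intro h; rw [h] at hZl; simp at hZl; omega)
    (by rw [← hsplit]; exact hc) (by rw [← hsplit]; exact hv)
    (by
      intro x hx
      rw [List.getLast?_eq_getElem?, hXl, hX, List.getElem?_take] at hx
      simp at hx
      rw [hfi i (by omega)] at hvi
      rw [List.getElem?_eq_getElem (by omega)] at hx
      simp at hx
      rw [← hx]; exact hvi.symm)
    (by
      intro x hx
      rw [List.getLast?_eq_getElem?, hYl, hY, List.getElem?_take, List.getElem?_drop] at hx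
      rw [if_pos (by omega), show i + 1 + (j - i - 1) = j by omega] at hx
      rw [hfi j (by omega)] at hvj
      rw [List.getElem?_eq_getElem (by omega)] at hx
      simp at hx
      rw [← hx]; exact hvj)
    (by
      intro y hy z hz
      rw [List.head?_eq_getElem?, hY, List.getElem?_take, List.getElem?_drop] at hy
      rw [List.head?_eq_getElem?, hZ, List.getElem?_drop] at hz
      rw [if_pos (by omega)] at hy
      rw [List.getElem?_eq_getElem (by omega)] at hy hz
      simp at hy hz
      rw [hfi _ (by omega), hfi _ (by omega)] at hadj
      rw [← hy, ← hz]; exact hadj)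
  refine ⟨_, key, ?_⟩
  rw [hsplit]
  ext w
  simp

/-- The basic consequence of the non-existence of an `(n-1)`-cycle through `W`. -/
lemma hno_aux {V : Type} [Fintype V] [DecidableEq V] {G : SimpleGraph V} [DecidableRel G.Adj]
    (k : ℕ) (W : Finset V)
    (hα : ∀ s : Finset V, (∀ u ∈ s, ∀ v ∈ s, u ≠ v → ¬ G.Adj u v) → s.card ≤ k)
    (hn : 4 ≤ Fintype.card V)
    (hW : ¬ HasCycleThrough G (Fintype.card V - 1) (W : Set V)) :
    ∀ (d : ℕ) (l : List V), Cyc G l → (univ \ l.toFinset).card = d + 1 → d + 1 ≤ k →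
      (∀ v, v ∉ l → ¬ Problematic G W k v) → False := by
  intro d
  induction d with
  | zero =>
    intro l hc hM hk hg
    apply hW
    have h1 : l.length = Fintype.card V - 1 := by
      rw [← List.toFinset_card_of_nodup hc.1]
      have := card_sdiff_add_card_eq_card (subset_univ l.toFinset)
      rw [card_univ] at this
      omega
    rw [← h1]
    refine cyc_to_walk l hc (by omega) _ ?_
    intro x hx
    by_contra hxl
    exact hg x hxl (Or.inr hx)
  | succ d ih =>
    intro l hc hM hk hg
    have hne : (univ \ l.toFinset).Nonempty := card_pos.1 (by omega)
    obtain ⟨v, hv⟩ := hne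
    have hv' : v ∉ l := by simpa using hv
    have hdeg : 2 * k < G.degree v := by
      by_contra h
      exact hg v hv' (Or.inl (by omega))
    obtain ⟨l', hc', hl'⟩ := absorb k hα l hc v hv' hdeg (by omega)
    refine ih l' hc' ?_ (by omega) ?_
    · have he : univ \ insert v l.toFinset = (univ \ l.toFinset).erase v := by
        ext w; simp [not_or]
      rw [hl', he, card_erase_of_mem hv]; omega
    · intro w hw
      apply hg
      intro h
      apply hw
      rw [← List.mem_toFinset, hl']
      simp [h]


/-- no cyclic list missing between `1` and `k` vertices, all of them good -/
def NoCyc {V : Type} [Fintype V] [DecidableEq V] (G : SimpleGraph V) (k : ℕ) (good : V → Prop) :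
    Prop :=
  ∀ l : List V, Cyc G l → (∃ v, v ∉ l) → (∀ v, v ∉ l → good v) →
    (univ \ l.toFinset).card ≤ k → False

structure HEnum {V : Type} (G : SimpleGraph V) (n : ℕ) where
  u : ℕ → V
  c : V → ℕ
  c_lt : ∀ v, c v < n
  uc : ∀ v, u (c v) = v
  cu : ∀ i, i < n → c (u i) = i
  adj : ∀ i, i + 1 < n → G.Adj (u i) (u (i + 1))
  wrap : G.Adj (u (n - 1)) (u 0)

def Gap {V : Type} {G : SimpleGraph V} {n : ℕ} (E : HEnum G n) (k : ℕ) (good : V → Prop)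
    (p q : ℕ) : Prop :=
  p + 1 < q ∧ q < n ∧ 5 * (q - p) ≤ k ∧ ∀ t, p < t → t < q → good (E.u t)

def segStart (s : ℕ × ℕ × Bool) : ℕ := if s.2.2 then s.2.1 else s.1
def segEnd (s : ℕ × ℕ × Bool) : ℕ := if s.2.2 then s.1 else s.2.1

def segList {V : Type} (u : ℕ → V) (s : ℕ × ℕ × Bool) : List V :=
  if s.2.2 then ((List.range' s.1 (s.2.1 + 1 - s.1)).map u).reverse
  else (List.range' s.1 (s.2.1 + 1 - s.1)).map u

lemma mem_segList {V : Type} (u : ℕ → V) (s : ℕ × ℕ × Bool) (v : V) :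
    v ∈ segList u s ↔ ∃ t, s.1 ≤ t ∧ t ≤ s.2.1 ∧ u t = v := by
  have : v ∈ segList u s ↔ v ∈ (List.range' s.1 (s.2.1 + 1 - s.1)).map u := by
    unfold segList; split <;> simp
  rw [this, List.mem_map]
  constructor
  · rintro ⟨t, ht, rfl⟩
    rw [List.mem_range'_1] at ht
    exact ⟨t, by omega, by omega, rfl⟩
  · rintro ⟨t, h1, h2, rfl⟩
    exact ⟨t, by rw [List.mem_range'_1]; omega, rfl⟩

lemma segList_head {V : Type} (u : ℕ → V) (s : ℕ × ℕ × Bool) (h : s.1 ≤ s.2.1) :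
    (segList u s).head? = some (u (segStart s)) := by
  unfold segList segStart
  split
  · rw [List.head?_reverse, List.getLast?_map, List.getLast?_range', if_neg (by omega)]
    simp; congr 1; omega
  · rw [List.head?_map, List.head?_range', if_neg (by omega)]; simp

lemma segList_last {V : Type} (u : ℕ → V) (s : ℕ × ℕ × Bool) (h : s.1 ≤ s.2.1) :
    (segList u s).getLast? = some (u (segEnd s)) := by
  unfold segList segEnd
  split
  · rw [List.getLast?_reverse, List.head?_map, List.head?_range', if_neg (by omega)]; simp
  · rw [List.getLast?_map, List.getLast?_range', if_neg (by omega)]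
    simp; congr 1; omega

lemma segList_chain {V : Type} {G : SimpleGraph V} {n : ℕ} (E : HEnum G n) (s : ℕ × ℕ × Bool)
    (h : s.1 ≤ s.2.1) (hn : s.2.1 < n) : (segList E.u s).IsChain G.Adj := by
  have h0 : ((List.range' s.1 (s.2.1 + 1 - s.1)).map E.u).IsChain G.Adj := by
    rw [List.isChain_iff_getElem]
    intro i hi
    simp at hi ⊢
    rw [← add_assoc]
    exact E.adj _ (by omega)
  unfold segList
  split
  · rw [List.isChain_reverse]
    exact h0.imp (fun a b h => h.symm)
  · exact h0

lemma segList_nodup {V : Type} {G : SimpleGraph V} {n : ℕ} (E : HEnum G n) (s : ℕ × ℕ × Bool)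
    (hn : s.2.1 < n) : (segList E.u s).Nodup := by
  have h0 : ((List.range' s.1 (s.2.1 + 1 - s.1)).map E.u).Nodup := by
    refine List.Nodup.map_on ?_ List.nodup_range'
    intro x hx y hy h
    rw [List.mem_range'_1] at hx hy
    rw [← E.cu x (by omega), ← E.cu y (by omega), h]
  unfold segList
  split
  · rw [List.nodup_reverse]; exact h0
  · exact h0

lemma seg_lemma {V : Type} [Fintype V] [DecidableEq V] {G : SimpleGraph V} {n k : ℕ}
    {good : V → Prop} (hno : NoCyc G k good) (E : HEnum G n)
    (L : List (ℕ × ℕ × Bool)) (gl : List (ℕ × ℕ))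
    (hle : ∀ s ∈ L, s.1 ≤ s.2.1 ∧ s.2.1 < n)
    (hdisj : L.Pairwise (fun s t => s.2.1 < t.1 ∨ t.2.1 < s.1))
    (hchain : L.IsChain (fun s t => G.Adj (E.u (segEnd s)) (E.u (segStart t))))
    (hlast : ∀ s ∈ L.getLast?, ∀ t ∈ L.head?, G.Adj (E.u (segEnd s)) (E.u (segStart t)))
    (hgl : gl.length ≤ 5)
    (hgap : ∀ g ∈ gl, Gap E k good g.1 g.2)
    (hcov : ∀ t < n, (∃ s ∈ L, s.1 ≤ t ∧ t ≤ s.2.1) ∨ ∃ g ∈ gl, g.1 < t ∧ t < g.2)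
    (hne : ∃ t < n, ∀ s ∈ L, ¬ (s.1 ≤ t ∧ t ≤ s.2.1)) : False := by
  classical
  have hnil : [] ∉ L.map (segList E.u) := by
    intro h
    rw [List.mem_map] at h
    obtain ⟨s, hs, h⟩ := h
    have := segList_head E.u s (hle s hs).1
    rw [h] at this
    simp at this
  have hmem : ∀ v, v ∈ L.flatMap (segList E.u) ↔ ∃ s ∈ L, s.1 ≤ E.c v ∧ E.c v ≤ s.2.1 := by
    intro v
    rw [List.mem_flatMap]
    refine exists_congr (fun s => and_congr_right (fun hs => ?_))
    rw [mem_segList]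
    constructor
    · rintro ⟨t, h1, h2, rfl⟩
      rw [E.cu t (by have := (hle s hs).2; omega)]
      exact ⟨h1, h2⟩
    · rintro ⟨h1, h2⟩
      exact ⟨_, h1, h2, E.uc v⟩
  have hgv : ∀ v, v ∉ L.flatMap (segList E.u) → ∃ g ∈ gl, g.1 < E.c v ∧ E.c v < g.2 := by
    intro v hv
    rw [hmem] at hv
    exact (hcov (E.c v) (E.c_lt v)).resolve_left hv
  apply hno (L.flatMap (segList E.u))
  · refine ⟨?_, ?_, ?_⟩
    · rw [List.nodup_flatMap]
      refine ⟨fun s hs => segList_nodup E s (hle s hs).2, ?_⟩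
      refine (List.Pairwise.imp_of_mem ?_ hdisj)
      intro s t hs ht h
      rw [Function.onFun, List.disjoint_left]
      intro v hv hv'
      rw [mem_segList] at hv hv'
      obtain ⟨a, h1, h2, rfl⟩ := hv
      obtain ⟨b, h3, h4, h5⟩ := hv'
      have := (hle s hs).2
      have := (hle t ht).2
      have : b = a := by rw [← E.cu a (by omega), ← E.cu b (by omega), h5]
      omega
    · rw [List.flatMap_def, List.isChain_flatten hnil]
      refine ⟨?_, ?_⟩
      · intro l hl
        rw [List.mem_map] at hl
        obtain ⟨s, hs, rfl⟩ := hl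
        exact segList_chain E s (hle s hs).1 (hle s hs).2
      · rw [List.isChain_map]
        have : L.IsChain (fun s t => s ∈ L ∧ t ∈ L ∧ G.Adj (E.u (segEnd s)) (E.u (segStart t))) := by
          rw [List.isChain_iff_getElem] at hchain ⊢
          intro i hi
          exact ⟨List.getElem_mem _, List.getElem_mem _, hchain i hi⟩
        refine this.imp ?_
        rintro s t ⟨hs, ht, h⟩ x hx y hy
        rw [segList_last _ _ (hle s hs).1] at hx
        rw [segList_head _ _ (hle t ht).1] at hy
        simp at hx hy
        rw [← hx, ← hy]; exact h
    · intro x hx y hy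
      rcases List.eq_nil_or_concat L with h | ⟨L', s, h⟩
      · rw [h] at hx; simp at hx
      · have hs : s ∈ L := by rw [h]; simp
        have hx' : x = E.u (segEnd s) := by
          rw [h] at hx
          rw [List.concat_eq_append, List.flatMap_append, List.getLast?_append] at hx
          simp [segList_last _ _ (hle s hs).1] at hx
          exact hx.symm
        have hsl : s ∈ L.getLast? := by rw [h]; simp
        cases hL : L with
        | nil => rw [hL] at hx; simp at hx
        | cons t L'' =>
          have ht : t ∈ L := by rw [hL]; simp
          rw [hL, List.flatMap_cons, List.head?_append, segList_head _ _ (hle t ht).1] at hy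
          simp at hy
          rw [hx', ← hy]
          exact hlast s hsl t (by rw [hL]; simp)
  · obtain ⟨t, ht, h⟩ := hne
    refine ⟨E.u t, ?_⟩
    rw [hmem, E.cu t ht]
    push Not
    intro s hs h1
    by_contra h2
    exact h s hs ⟨h1, by omega⟩
  · intro v hv
    obtain ⟨g, hg, h1, h2⟩ := hgv v hv
    have := (hgap g hg).2.2.2 _ h1 h2
    rwa [E.uc] at this
  · have hsub : univ \ (L.flatMap (segList E.u)).toFinset ⊆
        gl.toFinset.biUnion (fun g => (Ioo g.1 g.2).image E.u) := by
      intro v hv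
      have hv' : v ∉ L.flatMap (segList E.u) := by simpa using hv
      obtain ⟨g, hg, h1, h2⟩ := hgv v hv'
      rw [mem_biUnion]
      exact ⟨g, by simpa using hg, mem_image.2 ⟨E.c v, by simp [h1, h2], E.uc v⟩⟩
    have h1 := (card_le_card hsub).trans (card_biUnion_le_card_mul _ _ (k / 5) (by
      intro g hg
      have hg' : g ∈ gl := by simpa using hg
      refine card_image_le.trans ?_
      rw [Nat.card_Ioo]
      have := (hgap g hg').2.2.1
      omega))
    have h2 : gl.toFinset.card ≤ 5 := (List.toFinset_card_le gl).trans hgl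
    have h3 : gl.toFinset.card * (k / 5) ≤ 5 * (k / 5) := Nat.mul_le_mul_right _ h2
    omega


section patterns
variable {V : Type} [Fintype V] [DecidableEq V] {G : SimpleGraph V} {n k : ℕ}
  {good : V → Prop}

lemma pat_chord (hno : NoCyc G k good) (E : HEnum G n) (p p' : ℕ)
    (gp : Gap E k good p p')
   
    (e0 : G.Adj (E.u p) (E.u p')) : False := by
  obtain ⟨xp, yp, -, -⟩ := id gp
  have hw := E.wrap
  refine seg_lemma hno E [(0, p, false), (p', n - 1, false)]
    [(p, p')] ?_ ?_ ?_ ?_ ?_ ?_ ?_ ?_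
  · simp; omega
  · simp; omega
  · simp [segStart, segEnd, e0]
  · simp [segStart, segEnd, hw]
  · simp
  · simp [gp]
  · intro t ht; simp; omega
  · exact ⟨p + 1, by omega, by simp; omega⟩

lemma pat_T0 (hno : NoCyc G k good) (E : HEnum G n) (c c' a a' d d' : ℕ)
    (gc : Gap E k good c c') (ga : Gap E k good a a') (gd : Gap E k good d d')
    (oca : c' < a) (oad : a' < d)
    (e0 : G.Adj (E.u c) (E.u a')) (e1 : G.Adj (E.u d) (E.u a)) (e2 : G.Adj (E.u c') (E.u d')) : False := by
  obtain ⟨xc, yc, -, -⟩ := id gc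
  obtain ⟨xa, ya, -, -⟩ := id ga
  obtain ⟨xd, yd, -, -⟩ := id gd
  have hw := E.wrap
  refine seg_lemma hno E [(0, c, false), (a', d, false), (c', a, true), (d', n - 1, false)]
    [(c, c'), (a, a'), (d, d')] ?_ ?_ ?_ ?_ ?_ ?_ ?_ ?_
  · simp; omega
  · simp; omega
  · simp [segStart, segEnd, e0, e1, e2]
  · simp [segStart, segEnd, hw]
  · simp
  · simp [gc, ga, gd]
  · intro t ht; simp; omega
  · exact ⟨c + 1, by omega, by simp; omega⟩

lemma pat_F1a (hno : NoCyc G k good) (E : HEnum G n) (c c' a a' b b' d d' : ℕ)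
    (gc : Gap E k good c c') (ga : Gap E k good a a') (gb : Gap E k good b b') (gd : Gap E k good d d')
    (oca : c' < a) (oab : a' < b) (obd : b' < d)
    (e0 : G.Adj (E.u c) (E.u b')) (e1 : G.Adj (E.u d) (E.u a)) (e2 : G.Adj (E.u c') (E.u a')) (e3 : G.Adj (E.u b) (E.u d')) : False := by
  obtain ⟨xc, yc, -, -⟩ := id gc
  obtain ⟨xa, ya, -, -⟩ := id ga
  obtain ⟨xb, yb, -, -⟩ := id gb
  obtain ⟨xd, yd, -, -⟩ := id gd
  have hw := E.wrap
  refine seg_lemma hno E [(0, c, false), (b', d, false), (c', a, true), (a', b, false), (d', n - 1, false)]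
    [(c, c'), (a, a'), (b, b'), (d, d')] ?_ ?_ ?_ ?_ ?_ ?_ ?_ ?_
  · simp; omega
  · simp; omega
  · simp [segStart, segEnd, e0, e1, e2, e3]
  · simp [segStart, segEnd, hw]
  · simp
  · simp [gc, ga, gb, gd]
  · intro t ht; simp; omega
  · exact ⟨c + 1, by omega, by simp; omega⟩

lemma pat_F1b (hno : NoCyc G k good) (E : HEnum G n) (c c' a a' b b' d d' : ℕ)
    (gc : Gap E k good c c') (ga : Gap E k good a a') (gb : Gap E k good b b') (gd : Gap E k good d d')
    (oca : c' < a) (oab : a' < b) (obd : b' < d)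
    (e0 : G.Adj (E.u c) (E.u b')) (e1 : G.Adj (E.u d) (E.u b)) (e2 : G.Adj (E.u a') (E.u c')) (e3 : G.Adj (E.u a) (E.u d')) : False := by
  obtain ⟨xc, yc, -, -⟩ := id gc
  obtain ⟨xa, ya, -, -⟩ := id ga
  obtain ⟨xb, yb, -, -⟩ := id gb
  obtain ⟨xd, yd, -, -⟩ := id gd
  have hw := E.wrap
  refine seg_lemma hno E [(0, c, false), (b', d, false), (a', b, true), (c', a, false), (d', n - 1, false)]
    [(c, c'), (a, a'), (b, b'), (d, d')] ?_ ?_ ?_ ?_ ?_ ?_ ?_ ?_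
  · simp; omega
  · simp; omega
  · simp [segStart, segEnd, e0, e1, e2, e3]
  · simp [segStart, segEnd, hw]
  · simp
  · simp [gc, ga, gb, gd]
  · intro t ht; simp; omega
  · exact ⟨c + 1, by omega, by simp; omega⟩

lemma pat_G1a (hno : NoCyc G k good) (E : HEnum G n) (c c' b b' a a' e e' d d' : ℕ)
    (gc : Gap E k good c c') (gb : Gap E k good b b') (ga : Gap E k good a a') (ge : Gap E k good e e') (gd : Gap E k good d d')
    (ocb : c' < b) (oba : b' < a) (oae : a' < e) (oed : e' < d)
    (e0 : G.Adj (E.u c) (E.u e')) (e1 : G.Adj (E.u d) (E.u b)) (e2 : G.Adj (E.u c') (E.u b')) (e3 : G.Adj (E.u a) (E.u e)) (e4 : G.Adj (E.u a') (E.u d')) : False := by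
  obtain ⟨xc, yc, -, -⟩ := id gc
  obtain ⟨xb, yb, -, -⟩ := id gb
  obtain ⟨xa, ya, -, -⟩ := id ga
  obtain ⟨xe, ye, -, -⟩ := id ge
  obtain ⟨xd, yd, -, -⟩ := id gd
  have hw := E.wrap
  refine seg_lemma hno E [(0, c, false), (e', d, false), (c', b, true), (b', a, false), (a', e, true), (d', n - 1, false)]
    [(c, c'), (b, b'), (a, a'), (e, e'), (d, d')] ?_ ?_ ?_ ?_ ?_ ?_ ?_ ?_
  · simp; omega
  · simp; omega
  · simp [segStart, segEnd, e0, e1, e2, e3, e4]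
  · simp [segStart, segEnd, hw]
  · simp
  · simp [gc, gb, ga, ge, gd]
  · intro t ht; simp; omega
  · exact ⟨c + 1, by omega, by simp; omega⟩

lemma pat_G1b (hno : NoCyc G k good) (E : HEnum G n) (c c' b b' a a' e e' d d' : ℕ)
    (gc : Gap E k good c c') (gb : Gap E k good b b') (ga : Gap E k good a a') (ge : Gap E k good e e') (gd : Gap E k good d d')
    (ocb : c' < b) (oba : b' < a) (oae : a' < e) (oed : e' < d)
    (e0 : G.Adj (E.u c) (E.u e')) (e1 : G.Adj (E.u d) (E.u a')) (e2 : G.Adj (E.u e) (E.u a)) (e3 : G.Adj (E.u b') (E.u c')) (e4 : G.Adj (E.u b) (E.u d')) : False := by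
  obtain ⟨xc, yc, -, -⟩ := id gc
  obtain ⟨xb, yb, -, -⟩ := id gb
  obtain ⟨xa, ya, -, -⟩ := id ga
  obtain ⟨xe, ye, -, -⟩ := id ge
  obtain ⟨xd, yd, -, -⟩ := id gd
  have hw := E.wrap
  refine seg_lemma hno E [(0, c, false), (e', d, false), (a', e, false), (b', a, true), (c', b, false), (d', n - 1, false)]
    [(c, c'), (b, b'), (a, a'), (e, e'), (d, d')] ?_ ?_ ?_ ?_ ?_ ?_ ?_ ?_
  · simp; omega
  · simp; omega
  · simp [segStart, segEnd, e0, e1, e2, e3, e4]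
  · simp [segStart, segEnd, hw]
  · simp
  · simp [gc, gb, ga, ge, gd]
  · intro t ht; simp; omega
  · exact ⟨c + 1, by omega, by simp; omega⟩

lemma pat_G2a (hno : NoCyc G k good) (E : HEnum G n) (c c' a a' f f' e e' d d' : ℕ)
    (gc : Gap E k good c c') (ga : Gap E k good a a') (gf : Gap E k good f f') (ge : Gap E k good e e') (gd : Gap E k good d d')
    (oca : c' < a) (oaf : a' < f) (ofe : f' < e) (oed : e' < d)
    (e0 : G.Adj (E.u c) (E.u e')) (e1 : G.Adj (E.u d) (E.u f)) (e2 : G.Adj (E.u a') (E.u e)) (e3 : G.Adj (E.u f') (E.u c')) (e4 : G.Adj (E.u a) (E.u d')) : False := by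
  obtain ⟨xc, yc, -, -⟩ := id gc
  obtain ⟨xa, ya, -, -⟩ := id ga
  obtain ⟨xf, yf, -, -⟩ := id gf
  obtain ⟨xe, ye, -, -⟩ := id ge
  obtain ⟨xd, yd, -, -⟩ := id gd
  have hw := E.wrap
  refine seg_lemma hno E [(0, c, false), (e', d, false), (a', f, true), (f', e, true), (c', a, false), (d', n - 1, false)]
    [(c, c'), (a, a'), (f, f'), (e, e'), (d, d')] ?_ ?_ ?_ ?_ ?_ ?_ ?_ ?_
  · simp; omega
  · simp; omega
  · simp [segStart, segEnd, e0, e1, e2, e3, e4]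
  · simp [segStart, segEnd, hw]
  · simp
  · simp [gc, ga, gf, ge, gd]
  · intro t ht; simp; omega
  · exact ⟨c + 1, by omega, by simp; omega⟩

lemma pat_G2b (hno : NoCyc G k good) (E : HEnum G n) (c c' a a' f f' e e' d d' : ℕ)
    (gc : Gap E k good c c') (ga : Gap E k good a a') (gf : Gap E k good f f') (ge : Gap E k good e e') (gd : Gap E k good d d')
    (oca : c' < a) (oaf : a' < f) (ofe : f' < e) (oed : e' < d)
    (e0 : G.Adj (E.u c) (E.u e')) (e1 : G.Adj (E.u d) (E.u a)) (e2 : G.Adj (E.u c') (E.u f')) (e3 : G.Adj (E.u e) (E.u a')) (e4 : G.Adj (E.u f) (E.u d')) : False := by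
  obtain ⟨xc, yc, -, -⟩ := id gc
  obtain ⟨xa, ya, -, -⟩ := id ga
  obtain ⟨xf, yf, -, -⟩ := id gf
  obtain ⟨xe, ye, -, -⟩ := id ge
  obtain ⟨xd, yd, -, -⟩ := id gd
  have hw := E.wrap
  refine seg_lemma hno E [(0, c, false), (e', d, false), (c', a, true), (f', e, false), (a', f, false), (d', n - 1, false)]
    [(c, c'), (a, a'), (f, f'), (e, e'), (d, d')] ?_ ?_ ?_ ?_ ?_ ?_ ?_ ?_
  · simp; omega
  · simp; omega
  · simp [segStart, segEnd, e0, e1, e2, e3, e4]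
  · simp [segStart, segEnd, hw]
  · simp
  · simp [gc, ga, gf, ge, gd]
  · intro t ht; simp; omega
  · exact ⟨c + 1, by omega, by simp; omega⟩

end patterns


structure CoreHyp {ι V : Type} (G : SimpleGraph V) (S : Finset ι) (B : ι → Finset V)
    (c : V → ℕ) (pos h : ι → ℕ) (P m : ℕ) : Prop where
  cinj : ∀ a b, c a = c b → a = b
  posinj : ∀ i ∈ S, ∀ j ∈ S, pos i = pos j → i = j
  posP : ∀ i ∈ S, pos i < P
  hm : ∀ i ∈ S, h i < m
  star : ∀ i ∈ S, ∀ j ∈ S, i ≠ j → ∀ a ∈ B i, ∀ a' ∈ B i, ∀ b ∈ B j, ∀ b' ∈ B j,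
    G.Adj a b → G.Adj a' b' → a = a' ∨ b = b'
  T0 : ∀ i ∈ S, ∀ j ∈ S, pos i < pos j → ∀ a ∈ B i, ∀ d ∈ B j, G.Adj a d → h j ≤ h i
  F1 : ∀ i ∈ S, ∀ l ∈ S, ∀ j ∈ S, pos i < pos l → pos l < pos j →
    ∀ a ∈ B i, ∀ b ∈ B l, ∀ d ∈ B j, ∀ d' ∈ B j, G.Adj a d → G.Adj b d' → d ≠ d' → h i ≤ h l
  G1 : ∀ l ∈ S, ∀ i ∈ S, ∀ e ∈ S, ∀ j ∈ S, pos l < pos i → pos i < pos e → pos e < pos j →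
    ∀ a ∈ B i, ∀ a' ∈ B i, ∀ b ∈ B l, ∀ d ∈ B j, ∀ d' ∈ B j, ∀ z ∈ B e,
    c a' < c a → G.Adj a d → G.Adj a' z → G.Adj b d' → d' ≠ d → h l ≤ h e
  G2 : ∀ i ∈ S, ∀ f ∈ S, ∀ e ∈ S, ∀ j ∈ S, pos i < pos f → pos f < pos e → pos e < pos j →
    ∀ a ∈ B i, ∀ a' ∈ B i, ∀ b ∈ B f, ∀ d ∈ B j, ∀ d' ∈ B j, ∀ z ∈ B e,
    c a < c a' → G.Adj a d → G.Adj a' z → G.Adj b d' → d' ≠ d → h f ≤ h e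

section core
variable {ι V : Type} (G : SimpleGraph V) (S : Finset ι) (B : ι → Finset V)
    (pos h : ι → ℕ)

def Edg (i j : ι) (a d : V) : Prop := a ∈ B i ∧ d ∈ B j ∧ G.Adj a d

def Conf (i j : ι) : Prop :=
  i ∈ S ∧ j ∈ S ∧ pos i < pos j ∧ h i ≠ h j ∧ ∃ a d, Edg G B i j a d

def Lnorm (i j : ι) : Prop := ∃ l, pos i < pos l ∧ Conf G S B pos h l j ∧
  pos j - pos i < 2 * (pos j - pos l) ∧
  ∃ a d a' d', Edg G B i j a d ∧ Edg G B l j a' d' ∧ d ≠ d'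

def Gnorm (i j : ι) : Prop := ∃ l, pos l < pos i ∧ Conf G S B pos h l j ∧
  h i - h j < 2 * (h l - h j) ∧
  ∃ a d a' d', Edg G B i j a d ∧ Edg G B l j a' d' ∧ d ≠ d'

def ComI (i j : ι) (v : V) : Prop := ∀ a d, Edg G B i j a d → a = v
def ComJ (i j : ι) (v : V) : Prop := ∀ a d, Edg G B i j a d → d = v

end core

lemma log_two_lt {a b : ℕ} (_ha : a ≠ 0) (hb : b ≠ 0) (h : Nat.log 2 a = Nat.log 2 b) :
    a < 2 * b := by
  have h1 := Nat.lt_pow_succ_log_self (b := 2) (by norm_num) a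
  have h2 := Nat.pow_log_le_self 2 hb
  rw [h, pow_succ] at h1
  omega

lemma image_card_le_of_factor {α β γ : Type} [DecidableEq β] [DecidableEq γ] (s : Finset α)
    (f : α → β) (g : α → γ) (hfg : ∀ x ∈ s, ∀ y ∈ s, g x = g y → f x = f y) (T : Finset γ)
    (hT : ∀ x ∈ s, g x ∈ T) : (s.image f).card ≤ T.card := by
  classical
  rcases s.eq_empty_or_nonempty with rfl | ⟨x0, hx0⟩
  · simp
  · have : ∀ t : γ, ∃ b : β, ∀ x ∈ s, g x = t → f x = b := by
      intro t
      by_cases h : ∃ x ∈ s, g x = t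
      · obtain ⟨x, hx, rfl⟩ := h
        exact ⟨f x, fun y hy hxy => hfg y hy x hx hxy⟩
      · exact ⟨f x0, fun x hx hxt => (h ⟨x, hx, hxt⟩).elim⟩
    choose F hF using this
    calc (s.image f).card ≤ (T.image F).card := by
          apply card_le_card
          intro b hb
          rw [mem_image] at hb ⊢
          obtain ⟨x, hx, rfl⟩ := hb
          exact ⟨g x, hT x hx, (hF _ x hx rfl).symm⟩
      _ ≤ T.card := card_image_le

section core2
variable {ι V : Type} {G : SimpleGraph V} {S : Finset ι} {B : ι → Finset V} {c : V → ℕ}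
    {pos h : ι → ℕ} {P m : ℕ}

lemma conf_lt (H : CoreHyp G S B c pos h P m) {i j : ι} (hc : Conf G S B pos h i j) :
    h j < h i := by
  obtain ⟨hi, hj, hp, hh, a, d, ha, hd, had⟩ := hc
  have := H.T0 i hi j hj hp a ha d hd had
  omega

lemma conf_star (H : CoreHyp G S B c pos h P m) {i j : ι} (hc : Conf G S B pos h i j)
    {a d a' d' : V} (e : Edg G B i j a d) (e' : Edg G B i j a' d') : a = a' ∨ d = d' := by
  obtain ⟨hi, hj, hp, hh, -⟩ := hc
  refine H.star i hi j hj ?_ a e.1 a' e'.1 d e.2.1 d' e'.2.1 e.2.2 e'.2.2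
  rintro rfl; omega

lemma conf_com (H : CoreHyp G S B c pos h P m) {i j : ι} (hc : Conf G S B pos h i j) :
    (∃ v, ComI G B i j v) ∨ ∃ v, ComJ G B i j v := by
  obtain ⟨a, d, e⟩ := hc.2.2.2.2
  by_contra hcon
  push Not at hcon
  obtain ⟨h1, h2⟩ := hcon
  have h1 := h1 a
  have h2 := h2 d
  unfold ComI at h1
  unfold ComJ at h2
  push Not at h1 h2
  obtain ⟨a1, d1, e1, n1⟩ := h1
  obtain ⟨a2, d2, e2, n2⟩ := h2
  have k1 := (conf_star H hc e e1).resolve_left (fun h => n1 h.symm)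
  have k2 := (conf_star H hc e e2).resolve_right (fun h => n2 h.symm)
  rcases conf_star H hc e1 e2 with h | h
  · exact n1 (h.trans k2.symm)
  · exact n2 (h.symm.trans k1.symm)

lemma case_L {i1 i2 j : ι} (hc1 : Conf G S B pos h i1 j)
    (hc2 : Conf G S B pos h i2 j) (hp : pos i1 < pos i2)
    (hlog : Nat.log 2 (pos j - pos i1) = Nat.log 2 (pos j - pos i2))
    (hL : ¬ Lnorm G S B pos h i1 j) : ∃ v, ComJ G B i1 j v ∧ ComJ G B i2 j v := by
  have key : ∀ a d a' d', Edg G B i1 j a d → Edg G B i2 j a' d' → d = d' := by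
    intro a d a' d' e e'
    by_contra hne
    have := hc1.2.2.1
    have := hc2.2.2.1
    exact hL ⟨i2, hp, hc2, log_two_lt (by omega) (by omega) hlog, a, d, a', d', e, e', hne⟩
  obtain ⟨a, d, e⟩ := hc1.2.2.2.2
  obtain ⟨a', d', e'⟩ := hc2.2.2.2.2
  refine ⟨d, fun x y f => ?_, fun x y f => (key _ _ _ _ e f).symm⟩
  rw [key _ _ _ _ f e', key _ _ _ _ e e']

lemma case_G (H : CoreHyp G S B c pos h P m) {i1 i2 j : ι} (hc1 : Conf G S B pos h i1 j)
    (hc2 : Conf G S B pos h i2 j) (hp : pos i2 < pos i1)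
    (hlog : Nat.log 2 (h i1 - h j) = Nat.log 2 (h i2 - h j))
    (hL : ¬ Gnorm G S B pos h i1 j) : ∃ v, ComJ G B i1 j v ∧ ComJ G B i2 j v := by
  have key : ∀ a d a' d', Edg G B i1 j a d → Edg G B i2 j a' d' → d = d' := by
    intro a d a' d' e e'
    by_contra hne
    have := conf_lt H hc1
    have := conf_lt H hc2
    exact hL ⟨i2, hp, hc2, log_two_lt (by omega) (by omega) hlog, a, d, a', d', e, e', hne⟩
  obtain ⟨a, d, e⟩ := hc1.2.2.2.2
  obtain ⟨a', d', e'⟩ := hc2.2.2.2.2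
  refine ⟨d, fun x y f => ?_, fun x y f => (key _ _ _ _ e f).symm⟩
  rw [key _ _ _ _ f e', key _ _ _ _ e e']

lemma case_N (H : CoreHyp G S B c pos h P m) {i j1 j2 : ι} (hc1 : Conf G S B pos h i j1)
    (hc2 : Conf G S B pos h i j2) (hp : pos j1 < pos j2)
    (hlog : Nat.log 2 (pos j1 - pos i) = Nat.log 2 (pos j2 - pos i))
    (hlogh : Nat.log 2 (h i - h j1) = Nat.log 2 (h i - h j2))
    (hL : Lnorm G S B pos h i j2) (hG : Gnorm G S B pos h i j2) :
    ∃ v, ComI G B i j1 v ∧ ComI G B i j2 v := by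
  have key : ∀ a' z a d, Edg G B i j1 a' z → Edg G B i j2 a d → a' = a := by
    intro a' z a d e' e
    by_contra hne
    have q1 := hc1.2.2.1
    have q2 := hc2.2.2.1
    have q3 := conf_lt H hc1
    have q4 := conf_lt H hc2
    have hi := hc1.1
    have hj1 := hc1.2.1
    have hj2 := hc2.2.1
    rcases lt_trichotomy (c a) (c a') with hca | hca | hca
    · obtain ⟨l, hil, hcl, hlen, a0, d0, b, d', e0, eb, hdd⟩ := hL
      have : ∃ dd, Edg G B i j2 a dd ∧ d' ≠ dd := by
        rcases conf_star H hc2 e0 e with hh | hh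
        · exact ⟨d0, hh ▸ e0, hdd.symm⟩
        · exact ⟨d, e, hh ▸ hdd.symm⟩
      obtain ⟨dd, ed, hdd'⟩ := this
      have hF := H.F1 i hi l hcl.1 j2 hj2 hil hcl.2.2.1 a ed.1 b eb.1 dd ed.2.1 d' eb.2.1
        ed.2.2 eb.2.2 hdd'.symm
      have hle : pos j1 ≤ pos l := by
        by_contra hlt
        have := H.G2 i hi l hcl.1 j1 hj1 j2 hj2 hil (by omega) hp a ed.1 a' e'.1 b eb.1
          dd ed.2.1 d' eb.2.1 z e'.2.1 hca ed.2.2 e'.2.2 eb.2.2 hdd'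
        omega
      have := log_two_lt (by omega) (by omega) hlog.symm
      omega
    · exact hne (H.cinj _ _ hca.symm)
    · obtain ⟨l, hil, hcl, hlen, a0, d0, b, d', e0, eb, hdd⟩ := hG
      have : ∃ dd, Edg G B i j2 a dd ∧ d' ≠ dd := by
        rcases conf_star H hc2 e0 e with hh | hh
        · exact ⟨d0, hh ▸ e0, hdd.symm⟩
        · exact ⟨d, e, hh ▸ hdd.symm⟩
      obtain ⟨dd, ed, hdd'⟩ := this
      have := H.G1 l hcl.1 i hi j1 hj1 j2 hj2 hil q1 hp a ed.1 a' e'.1 b eb.1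
          dd ed.2.1 d' eb.2.1 z e'.2.1 hca ed.2.2 e'.2.2 eb.2.2 hdd'
      have q5 := conf_lt H hcl
      have := log_two_lt (by omega) (by omega) hlogh.symm
      omega
  obtain ⟨a, d, e⟩ := hc1.2.2.2.2
  obtain ⟨a', d', e'⟩ := hc2.2.2.2.2
  refine ⟨a, fun x y f => ?_, fun x y f => (key _ _ _ _ e f).symm⟩
  rw [key _ _ _ _ f e', key _ _ _ _ e e']

lemma com_unique_I {i j : ι} (hc : Conf G S B pos h i j) {v w : V}
    (h1 : ComI G B i j v) (h2 : ComI G B i j w) : v = w := by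
  obtain ⟨a, d, e⟩ := hc.2.2.2.2
  rw [← h1 _ _ e, ← h2 _ _ e]

lemma com_unique_J {i j : ι} (hc : Conf G S B pos h i j) {v w : V}
    (h1 : ComJ G B i j v) (h2 : ComJ G B i j w) : v = w := by
  obtain ⟨a, d, e⟩ := hc.2.2.2.2
  rw [← h1 _ _ e, ← h2 _ _ e]

theorem core_lemma [DecidableEq V] (H : CoreHyp G S B c pos h P m) :
    ∃ Del : Finset V, Del.card ≤ S.card * ((Nat.log 2 P + 2) * (Nat.log 2 m + 2)) ∧
      ∀ i ∈ S, ∀ j ∈ S, h i ≠ h j → ∀ a ∈ B i, ∀ d ∈ B j, G.Adj a d → a ∈ Del ∨ d ∈ Del := by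
  classical
  rcases isEmpty_or_nonempty V with hV | hV
  · exact ⟨∅, by simp, fun i _ j _ _ a => (hV.false a).elim⟩
  have hκ : ∀ q : ι × ι, ∃ v : V, Conf G S B pos h q.1 q.2 →
      (ComI G B q.1 q.2 v ∨ ComJ G B q.1 q.2 v) ∧
      ((Lnorm G S B pos h q.1 q.2 ∧ Gnorm G S B pos h q.1 q.2) → (∃ w, ComI G B q.1 q.2 w) →
        ComI G B q.1 q.2 v) ∧
      (¬ (Lnorm G S B pos h q.1 q.2 ∧ Gnorm G S B pos h q.1 q.2) → (∃ w, ComJ G B q.1 q.2 w) →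
        ComJ G B q.1 q.2 v) := by
    intro q
    by_cases hc : Conf G S B pos h q.1 q.2
    · have hcom := conf_com H hc
      by_cases hn : Lnorm G S B pos h q.1 q.2 ∧ Gnorm G S B pos h q.1 q.2
      · by_cases hI : ∃ w, ComI G B q.1 q.2 w
        · obtain ⟨w, hw⟩ := hI
          exact ⟨w, fun _ => ⟨Or.inl hw, fun _ _ => hw, fun h => (h hn).elim⟩⟩
        · obtain ⟨w, hw⟩ := hcom.resolve_left hI
          exact ⟨w, fun _ => ⟨Or.inr hw, fun _ h => (hI h).elim, fun h => (h hn).elim⟩⟩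
      · by_cases hI : ∃ w, ComJ G B q.1 q.2 w
        · obtain ⟨w, hw⟩ := hI
          exact ⟨w, fun _ => ⟨Or.inr hw, fun h => (hn h).elim, fun _ _ => hw⟩⟩
        · obtain ⟨w, hw⟩ := hcom.resolve_right hI
          exact ⟨w, fun _ => ⟨Or.inl hw, fun h => (hn h).elim, fun _ h => (hI h).elim⟩⟩
    · exact ⟨hV.some, fun h => (hc h).elim⟩
  choose κ hκ using hκ
  set CP := (S ×ˢ S).filter (fun q => Conf G S B pos h q.1 q.2) with hCP
  have hCPm : ∀ q ∈ CP, Conf G S B pos h q.1 q.2 := fun q hq => (mem_filter.1 hq).2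
  set K : ι × ι → ι × ℕ × ℕ := fun q =>
    if ¬ Lnorm G S B pos h q.1 q.2 then (q.2, Nat.log 2 (pos q.2 - pos q.1) + 1, 0)
    else if ¬ Gnorm G S B pos h q.1 q.2 then (q.2, 0, Nat.log 2 (h q.1 - h q.2) + 1)
    else (q.1, Nat.log 2 (pos q.2 - pos q.1) + 1, Nat.log 2 (h q.1 - h q.2) + 1) with hK
  refine ⟨CP.image κ, ?_, ?_⟩
  · have hT : ∀ q ∈ CP, K q ∈ S ×ˢ (range (Nat.log 2 P + 2) ×ˢ range (Nat.log 2 m + 2)) := by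
      intro q hq
      have hc := hCPm q hq
      have h1 : Nat.log 2 (pos q.2 - pos q.1) ≤ Nat.log 2 P :=
        Nat.log_mono_right (by have := H.posP q.2 hc.2.1; omega)
      have h2 : Nat.log 2 (h q.1 - h q.2) ≤ Nat.log 2 m :=
        Nat.log_mono_right (by have := H.hm q.1 hc.1; omega)
      have := hc.1
      have := hc.2.1
      simp only [hK]
      split_ifs <;> simp only [mem_product, mem_range] <;> refine ⟨by assumption, by omega, by omega⟩
    refine (image_card_le_of_factor CP κ K ?_ _ hT).trans ?_
    · rintro ⟨i1, j1⟩ hq1 ⟨i2, j2⟩ hq2 hkk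
      have hc1 := hCPm _ hq1
      have hc2 := hCPm _ hq2
      have hk1 := hκ _ hc1
      have hk2 := hκ _ hc2
      simp only at hc1 hc2 hk1 hk2
      simp only [hK] at hkk
      by_cases hL1 : Lnorm G S B pos h i1 j1
      · by_cases hG1 : Gnorm G S B pos h i1 j1
        · by_cases hL2 : Lnorm G S B pos h i2 j2
          · by_cases hG2 : Gnorm G S B pos h i2 j2
            · simp [hL1, hL2, hG1, hG2] at hkk
              obtain ⟨rfl, hl, hg⟩ := hkk
              by_cases hj : j1 = j2
              · rw [hj]
              have : ∃ v, ComI G B i1 j1 v ∧ ComI G B i1 j2 v := by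
                rcases lt_trichotomy (pos j1) (pos j2) with hp | hp | hp
                · exact case_N H hc1 hc2 hp hl hg hL2 hG2
                · exact (hj (H.posinj j1 hc1.2.1 j2 hc2.2.1 hp)).elim
                · obtain ⟨v, h1, h2⟩ := case_N H hc2 hc1 hp hl.symm hg.symm hL1 hG1
                  exact ⟨v, h2, h1⟩
              obtain ⟨v, h1, h2⟩ := this
              rw [com_unique_I hc1 (hk1.2.1 ⟨hL1, hG1⟩ ⟨v, h1⟩) h1,
                com_unique_I hc2 (hk2.2.1 ⟨hL2, hG2⟩ ⟨v, h2⟩) h2]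
            · simp [hL1, hL2, hG1, hG2] at hkk
          · simp [hL1, hL2, hG1] at hkk
        · by_cases hL2 : Lnorm G S B pos h i2 j2
          · by_cases hG2 : Gnorm G S B pos h i2 j2
            · simp [hL1, hL2, hG1, hG2] at hkk
            · simp [hL1, hL2, hG1, hG2] at hkk
              obtain ⟨rfl, hg⟩ := hkk
              rcases lt_trichotomy (pos i2) (pos i1) with hp | hp | hp
              · obtain ⟨v, h1, h2⟩ := case_G H hc1 hc2 hp hg hG1
                rw [com_unique_J hc1 (hk1.2.2 (fun h => hG1 h.2) ⟨v, h1⟩) h1,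
                  com_unique_J hc2 (hk2.2.2 (fun h => hG2 h.2) ⟨v, h2⟩) h2]
              · have := H.posinj i2 hc2.1 i1 hc1.1 hp
                rw [this]
              · obtain ⟨v, h2, h1⟩ := case_G H hc2 hc1 hp hg.symm hG2
                rw [com_unique_J hc1 (hk1.2.2 (fun h => hG1 h.2) ⟨v, h1⟩) h1,
                  com_unique_J hc2 (hk2.2.2 (fun h => hG2 h.2) ⟨v, h2⟩) h2]
          · simp [hL1, hL2, hG1] at hkk
      · by_cases hL2 : Lnorm G S B pos h i2 j2
        · by_cases hG2 : Gnorm G S B pos h i2 j2 <;> simp [hL1, hL2, hG2] at hkk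
        · simp [hL1, hL2] at hkk
          obtain ⟨rfl, hl⟩ := hkk
          rcases lt_trichotomy (pos i1) (pos i2) with hp | hp | hp
          · obtain ⟨v, h1, h2⟩ := case_L hc1 hc2 hp hl hL1
            rw [com_unique_J hc1 (hk1.2.2 (fun h => hL1 h.1) ⟨v, h1⟩) h1,
              com_unique_J hc2 (hk2.2.2 (fun h => hL2 h.1) ⟨v, h2⟩) h2]
          · have := H.posinj i1 hc1.1 i2 hc2.1 hp
            rw [this]
          · obtain ⟨v, h2, h1⟩ := case_L hc2 hc1 hp hl.symm hL2
            rw [com_unique_J hc1 (hk1.2.2 (fun h => hL1 h.1) ⟨v, h1⟩) h1,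
              com_unique_J hc2 (hk2.2.2 (fun h => hL2 h.1) ⟨v, h2⟩) h2]
    · simp [card_product]
  · have main : ∀ i ∈ S, ∀ j ∈ S, h i ≠ h j → pos i < pos j → ∀ a ∈ B i, ∀ d ∈ B j,
        G.Adj a d → a ∈ CP.image κ ∨ d ∈ CP.image κ := by
      intro i hi j hj hh hp a ha d hd had
      have hc : Conf G S B pos h i j := ⟨hi, hj, hp, hh, a, d, ha, hd, had⟩
      have hq : (i, j) ∈ CP := by
        rw [hCP, mem_filter, mem_product]; exact ⟨⟨hi, hj⟩, hc⟩
      rcases (hκ (i, j) hc).1 with h1 | h1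
      · left
        rw [h1 a d ⟨ha, hd, had⟩]
        exact mem_image_of_mem _ hq
      · right
        rw [h1 a d ⟨ha, hd, had⟩]
        exact mem_image_of_mem _ hq
    intro i hi j hj hh a ha d hd had
    rcases lt_trichotomy (pos i) (pos j) with hp | hp | hp
    · exact main i hi j hj hh hp a ha d hd had
    · exact (hh (by rw [H.posinj i hi j hj hp])).elim
    · exact (main j hj i hi hh.symm hp d hd a ha had.symm).symm

end core2


structure ArcFam {ι V : Type} {G : SimpleGraph V} {n : ℕ} (E : HEnum G n) (k : ℕ)
    (good : V → Prop) (S : Finset ι) (A : ι → Finset V) : Prop where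
  inner : ∀ i ∈ S, ∀ a ∈ A i, ∀ a' ∈ A i, E.c a < E.c a' → Gap E k good (E.c a) (E.c a')
  order : ∀ i ∈ S, ∀ j ∈ S, i ≠ j →
    (∀ a ∈ A i, ∀ b ∈ A j, E.c a < E.c b) ∨ (∀ a ∈ A i, ∀ b ∈ A j, E.c b < E.c a)
  star : ∀ i ∈ S, ∀ j ∈ S, i ≠ j → ∀ a ∈ A i, ∀ a' ∈ A i, ∀ b ∈ A j, ∀ b' ∈ A j,
    G.Adj a b → G.Adj a' b' → a = a' ∨ b = b'

/-- rank -/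
def rk {α : Type} (T : Finset α) (f : α → ℕ) (x : α) : ℕ := (T.filter (fun y => f y < f x)).card

lemma rk_mono {α : Type} (T : Finset α) (f : α → ℕ) {x y : α} (h : f x ≤ f y) :
    rk T f x ≤ rk T f y := by
  apply card_le_card
  intro w hw
  rw [mem_filter] at hw ⊢
  exact ⟨hw.1, by omega⟩

lemma rk_strict {α : Type} (T : Finset α) (f : α → ℕ) {x y : α} (hx : x ∈ T) (h : f x < f y) :
    rk T f x < rk T f y := by
  apply card_lt_card
  rw [ssubset_iff_of_subset]
  · exact ⟨x, by simp [hx, h], by simp⟩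
  · intro w hw
    rw [mem_filter] at hw ⊢
    exact ⟨hw.1, by omega⟩

lemma rk_lt {α : Type} (T : Finset α) (f : α → ℕ) {x : α} (hx : x ∈ T) : rk T f x < T.card := by
  apply card_lt_card
  rw [ssubset_iff_of_subset (filter_subset _ _)]
  exact ⟨x, hx, by simp⟩

lemma HEnum.cinj {V : Type} {G : SimpleGraph V} {n : ℕ} (E : HEnum G n) (a b : V)
    (h : E.c a = E.c b) : a = b := by rw [← E.uc a, ← E.uc b, h]

lemma ArcFam.mono {ι V : Type} {G : SimpleGraph V} {n k : ℕ}
    {good : V → Prop} {E : HEnum G n} {S : Finset ι} {A : ι → Finset V}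
    (F : ArcFam E k good S A) {S' : Finset ι} (hS : S' ⊆ S) {A' : ι → Finset V}
    (hA : ∀ i ∈ S', A' i ⊆ A i) : ArcFam E k good S' A' where
  inner := fun i hi a ha a' ha' => F.inner i (hS hi) a (hA i hi ha) a' (hA i hi ha')
  order := fun i hi j hj hij => (F.order i (hS hi) j (hS hj) hij).imp
    (fun h a ha b hb => h a (hA i hi ha) b (hA j hj hb))
    (fun h a ha b hb => h a (hA i hi ha) b (hA j hj hb))
  star := fun i hi j hj hij a ha a' ha' b hb b' hb' =>
    F.star i (hS hi) j (hS hj) hij a (hA i hi ha) a' (hA i hi ha') b (hA j hj hb) b' (hA j hj hb')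

section
variable {ι V : Type} [Fintype V] [DecidableEq V] {G : SimpleGraph V} {n k : ℕ}
  {good : V → Prop} {E : HEnum G n} {S : Finset ι} {A : ι → Finset V}

lemma ArcFam.indep (hno : NoCyc G k good) (F : ArcFam E k good S A) {i : ι} (hi : i ∈ S) :
    ∀ a ∈ A i, ∀ b ∈ A i, ¬ G.Adj a b := by
  intro a ha b hb hab
  rcases lt_trichotomy (E.c a) (E.c b) with h | h | h
  · exact pat_chord hno E _ _ (F.inner i hi a ha b hb h) (by rw [E.uc, E.uc]; exact hab)
  · exact hab.ne (E.cinj _ _ h)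
  · exact pat_chord hno E _ _ (F.inner i hi b hb a ha h) (by rw [E.uc, E.uc]; exact hab.symm)

lemma low_first (hno : NoCyc G k good) (F : ArcFam E k good S A) {C : ι} (hC : C ∈ S)
    (S1 : Finset ι) (hS1 : S1 ⊆ S)
    (hfirst : ∀ j ∈ S1, ∀ a ∈ A C, ∀ b ∈ A j, E.c a < E.c b)
    (v z : ι → V) (hv : ∀ i ∈ S1, v i ∈ A C) (hz : ∀ i ∈ S1, z i ∈ A i)
    (hadj : ∀ i ∈ S1, G.Adj (v i) (z i)) (B : ι → Finset V)
    (hB : ∀ i ∈ S1, ∀ b ∈ B i, b ∈ A i ∧ E.c b < E.c (z i)) (V0 : Finset V)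
    (hV0 : ∀ i ∈ S1, v i ∈ V0) :
    ∃ Del : Finset V,
      Del.card ≤ S1.card * ((Nat.log 2 S1.card + 2) * (Nat.log 2 V0.card + 2)) ∧
      ∀ i ∈ S1, ∀ j ∈ S1, v i ≠ v j → ∀ a ∈ B i, ∀ d ∈ B j, G.Adj a d → a ∈ Del ∨ d ∈ Del := by
  set pos : ι → ℕ := rk S1 (fun i => E.c (z i)) with hpos
  set h : ι → ℕ := fun i => rk V0 E.c (v i) with hh
  have hpl : ∀ i ∈ S1, ∀ j ∈ S1, pos i < pos j → ∀ a ∈ A i, ∀ b ∈ A j, E.c a < E.c b := by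
    intro i hi j hj hij
    have h1 : E.c (z i) < E.c (z j) := by
      by_contra hcon
      have := rk_mono S1 (fun i => E.c (z i)) (x := j) (y := i) (by simpa using hcon)
      rw [← hpos] at this
      omega
    have hne : i ≠ j := by rintro rfl; omega
    rcases F.order i (hS1 hi) j (hS1 hj) hne with h2 | h2
    · exact h2
    · have := h2 _ (hz i hi) _ (hz j hj)
      omega
  have hhl : ∀ i ∈ S1, ∀ j ∈ S1, h i < h j → Gap E k good (E.c (v i)) (E.c (v j)) := by
    intro i hi j hj hij
    have h1 : E.c (v i) < E.c (v j) := by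
      by_contra hcon
      have := rk_mono V0 E.c (x := v j) (y := v i) (by simpa using hcon)
      simp only [hh] at hij
      omega
    exact F.inner C hC _ (hv i hi) _ (hv j hj) h1
  have hgz : ∀ i ∈ S1, ∀ b ∈ B i, Gap E k good (E.c b) (E.c (z i)) := fun i hi b hb =>
    F.inner i (hS1 hi) _ (hB i hi b hb).1 _ (hz i hi) (hB i hi b hb).2
  have hg : ∀ i ∈ S1, ∀ a ∈ B i, ∀ b ∈ B i, E.c a < E.c b → Gap E k good (E.c a) (E.c b) :=
    fun i hi a ha b hb => F.inner i (hS1 hi) _ (hB i hi a ha).1 _ (hB i hi b hb).1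
  have hf : ∀ i ∈ S1, ∀ j ∈ S1, ∀ b ∈ B j, E.c (v i) < E.c b :=
    fun i hi j hj b hb => hfirst j hj _ (hv i hi) _ (hB j hj b hb).1
  have ho : ∀ i ∈ S1, ∀ j ∈ S1, pos i < pos j → ∀ a ∈ B i, ∀ b ∈ B j, E.c a < E.c b :=
    fun i hi j hj hij a ha b hb => hpl i hi j hj hij _ (hB i hi a ha).1 _ (hB j hj b hb).1
  have hoz : ∀ i ∈ S1, ∀ j ∈ S1, pos i < pos j → ∀ b ∈ B j, E.c (z i) < E.c b :=
    fun i hi j hj hij b hb => hpl i hi j hj hij _ (hz i hi) _ (hB j hj b hb).1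
  have hu : ∀ {x y : V}, G.Adj x y → G.Adj (E.u (E.c x)) (E.u (E.c y)) := by
    intro x y hxy; rw [E.uc, E.uc]; exact hxy
  have H : CoreHyp G S1 B E.c pos h S1.card V0.card := by
    refine ⟨E.cinj, ?_, ?_, ?_, ?_, ?_, ?_, ?_, ?_⟩
    · intro i hi j hj hij
      by_contra hne
      rcases F.order i (hS1 hi) j (hS1 hj) hne with h2 | h2
      · have := rk_strict S1 (fun i => E.c (z i)) hi (h2 _ (hz i hi) _ (hz j hj))
        rw [← hpos] at this
        omega
      · have := rk_strict S1 (fun i => E.c (z i)) hj (h2 _ (hz i hi) _ (hz j hj))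
        rw [← hpos] at this
        omega
    · exact fun i hi => rk_lt S1 _ hi
    · exact fun i hi => rk_lt V0 _ (hV0 i hi)
    · exact fun i hi j hj hij a ha a' ha' b hb b' hb' =>
        F.star i (hS1 hi) j (hS1 hj) hij a (hB i hi a ha).1 a' (hB i hi a' ha').1
          b (hB j hj b hb).1 b' (hB j hj b' hb').1
    · intro i hi j hj hp a ha d hd had
      by_contra hcon
      exact pat_T0 hno E (E.c (v i)) (E.c (v j)) (E.c a) (E.c (z i)) (E.c d) (E.c (z j))
        (hhl i hi j hj (by omega)) (hgz i hi a ha) (hgz j hj d hd) (hf j hj i hi a ha)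
        (hoz i hi j hj hp d hd) (hu (hadj i hi)) (hu had.symm) (hu (hadj j hj))
    · intro i hi l hl j hj hil hlj a ha b hb d hd d' hd' had hbd hdd
      by_contra hcon
      have gg := hhl l hl i hi (by omega)
      rcases lt_trichotomy (E.c d) (E.c d') with hlt | hlt | hlt
      · exact pat_F1a hno E (E.c (v l)) (E.c (v i)) (E.c a) (E.c (z i)) (E.c b) (E.c (z l))
          (E.c d) (E.c d') gg (hgz i hi a ha) (hgz l hl b hb) (hg j hj d hd d' hd' hlt)
          (hf i hi i hi a ha) (hoz i hi l hl hil b hb) (hoz l hl j hj hlj d hd)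
          (hu (hadj l hl)) (hu had.symm) (hu (hadj i hi)) (hu hbd)
      · exact hdd (E.cinj _ _ hlt)
      · exact pat_F1b hno E (E.c (v l)) (E.c (v i)) (E.c a) (E.c (z i)) (E.c b) (E.c (z l))
          (E.c d') (E.c d) gg (hgz i hi a ha) (hgz l hl b hb) (hg j hj d' hd' d hd hlt)
          (hf i hi i hi a ha) (hoz i hi l hl hil b hb) (hoz l hl j hj hlj d' hd')
          (hu (hadj l hl)) (hu hbd.symm) (hu (hadj i hi).symm) (hu had)
    · intro l hl i hi e he j hj hli hie hej a ha a' ha' b hb d hd d' hd' w hw haa had haw hbd hdd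
      by_contra hcon
      have gg := hhl e he l hl (by omega)
      rcases lt_trichotomy (E.c d') (E.c d) with hlt | hlt | hlt
      · exact pat_G1a hno E (E.c (v e)) (E.c (v l)) (E.c b) (E.c (z l)) (E.c a') (E.c a)
          (E.c w) (E.c (z e)) (E.c d') (E.c d) gg (hgz l hl b hb) (hg i hi a' ha' a ha haa)
          (hgz e he w hw) (hg j hj d' hd' d hd hlt) (hf l hl l hl b hb)
          (hoz l hl i hi hli a' ha') (ho i hi e he hie a ha w hw) (hoz e he j hj hej d' hd')
          (hu (hadj e he)) (hu hbd.symm) (hu (hadj l hl)) (hu haw) (hu had)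
      · exact hdd (E.cinj _ _ hlt)
      · exact pat_G1b hno E (E.c (v e)) (E.c (v l)) (E.c b) (E.c (z l)) (E.c a') (E.c a)
          (E.c w) (E.c (z e)) (E.c d) (E.c d') gg (hgz l hl b hb) (hg i hi a' ha' a ha haa)
          (hgz e he w hw) (hg j hj d hd d' hd' hlt) (hf l hl l hl b hb)
          (hoz l hl i hi hli a' ha') (ho i hi e he hie a ha w hw) (hoz e he j hj hej d hd)
          (hu (hadj e he)) (hu had.symm) (hu haw.symm) (hu (hadj l hl).symm) (hu hbd)
    · intro i hi f hf' e he j hj hif hfe hej a ha a' ha' b hb d hd d' hd' w hw haa had haw hbd hdd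
      by_contra hcon
      have gg := hhl e he f hf' (by omega)
      rcases lt_trichotomy (E.c d') (E.c d) with hlt | hlt | hlt
      · exact pat_G2a hno E (E.c (v e)) (E.c (v f)) (E.c a) (E.c a') (E.c b) (E.c (z f))
          (E.c w) (E.c (z e)) (E.c d') (E.c d) gg (hg i hi a ha a' ha' haa) (hgz f hf' b hb)
          (hgz e he w hw) (hg j hj d' hd' d hd hlt) (hf f hf' i hi a ha)
          (ho i hi f hf' hif a' ha' b hb) (hoz f hf' e he hfe w hw) (hoz e he j hj hej d' hd')
          (hu (hadj e he)) (hu hbd.symm) (hu haw) (hu (hadj f hf').symm) (hu had)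
      · exact hdd (E.cinj _ _ hlt)
      · exact pat_G2b hno E (E.c (v e)) (E.c (v f)) (E.c a) (E.c a') (E.c b) (E.c (z f))
          (E.c w) (E.c (z e)) (E.c d) (E.c d') gg (hg i hi a ha a' ha' haa) (hgz f hf' b hb)
          (hgz e he w hw) (hg j hj d hd d' hd' hlt) (hf f hf' i hi a ha)
          (ho i hi f hf' hif a' ha' b hb) (hoz f hf' e he hfe w hw) (hoz e he j hj hej d hd)
          (hu (hadj e he)) (hu had.symm) (hu (hadj f hf')) (hu haw.symm) (hu hbd)
  obtain ⟨Del, h1, h2⟩ := core_lemma H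
  refine ⟨Del, h1, fun i hi j hj hvij => h2 i hi j hj ?_⟩
  intro hij
  rcases lt_trichotomy (E.c (v i)) (E.c (v j)) with hlt | hlt | hlt
  · have := rk_strict V0 E.c (hV0 i hi) hlt
    simp only [hh] at hij
    omega
  · exact hvij (E.cinj _ _ hlt)
  · have := rk_strict V0 E.c (hV0 j hj) hlt
    simp only [hh] at hij
    omega

end

section rot
variable {ι V : Type} {G : SimpleGraph V} {n k : ℕ}
  {good : V → Prop}

/-- rotation of an enumeration so that it starts at index `s` -/
def HEnum.rot (E : HEnum G n) (s : ℕ) (hs : s < n) : HEnum G n where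
  u := fun i => if i + s < n then E.u (i + s) else E.u (i + s - n)
  c := fun v => if s ≤ E.c v then E.c v - s else E.c v + n - s
  c_lt := by
    intro v
    have := E.c_lt v
    split_ifs <;> omega
  uc := by
    intro v
    have := E.c_lt v
    by_cases h : s ≤ E.c v
    · simp only [if_pos h]
      rw [if_pos (by omega), show E.c v - s + s = E.c v by omega, E.uc]
    · simp only [if_neg h]
      rw [if_neg (by omega), show E.c v + n - s + s - n = E.c v by omega, E.uc]
  cu := by
    intro i hi
    by_cases h : i + s < n
    · simp only [if_pos h, E.cu _ h]
      rw [if_pos (by omega)]; omega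
    · simp only [if_neg h, E.cu (i + s - n) (by omega)]
      rw [if_neg (by omega)]; omega
  adj := by
    intro i hi
    by_cases h : i + 1 + s < n
    · rw [if_pos (by omega), if_pos h, show i + 1 + s = i + s + 1 by omega]
      exact E.adj _ (by omega)
    · rw [if_neg h]
      by_cases h' : i + s < n
      · rw [if_pos h', show i + 1 + s - n = 0 by omega, show i + s = n - 1 by omega]
        exact E.wrap
      · rw [if_neg h', show i + 1 + s - n = i + s - n + 1 by omega]
        exact E.adj _ (by omega)
  wrap := by
    by_cases h0 : s = 0
    · subst h0
      rw [if_pos (by omega), if_pos (by omega)]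
      exact E.wrap
    · rw [if_neg (by omega), if_pos (by omega), show n - 1 + s - n = s - 1 by omega]
      have := E.adj (s - 1) (by omega)
      rw [show s - 1 + 1 = s by omega] at this
      simpa using this

/-- reflection of an enumeration -/
def HEnum.refl (E : HEnum G n) (hn : 0 < n) : HEnum G n where
  u := fun i => E.u (n - 1 - i)
  c := fun v => n - 1 - E.c v
  c_lt := by intro v; omega
  uc := by
    intro v
    have := E.c_lt v
    rw [show n - 1 - (n - 1 - E.c v) = E.c v by omega, E.uc]
  cu := by
    intro i hi
    rw [E.cu _ (by omega)]; omega
  adj := by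
    intro i hi
    have := E.adj (n - 1 - (i + 1)) (by omega)
    rw [show n - 1 - (i + 1) + 1 = n - 1 - i by omega] at this
    exact this.symm
  wrap := by
    simp only [Nat.sub_self, Nat.sub_zero]
    exact E.wrap.symm

lemma ArcFam.reflect {E : HEnum G n} {S : Finset ι} {A : ι → Finset V} (hn : 0 < n)
    (F : ArcFam E k good S A) : ArcFam (E.refl hn) k good S A where
  inner := by
    intro i hi a ha a' ha' h
    have h1 := E.c_lt a
    have h2 := E.c_lt a'
    simp only [HEnum.refl] at h
    obtain ⟨g1, g2, g3, g4⟩ := F.inner i hi a' ha' a ha (by omega)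
    refine ⟨?_, ?_, ?_, ?_⟩
    · simp only [HEnum.refl]; omega
    · simp only [HEnum.refl]; omega
    · simp only [HEnum.refl]; omega
    · intro t ht1 ht2
      simp only [HEnum.refl] at ht1 ht2 ⊢
      exact g4 _ (by omega) (by omega)
  order := by
    intro i hi j hj hij
    rcases F.order i hi j hj hij with h | h
    · right
      intro a ha b hb
      have := h a ha b hb
      have h2 := E.c_lt b
      simp only [HEnum.refl]; omega
    · left
      intro a ha b hb
      have := h a ha b hb
      have h2 := E.c_lt a
      simp only [HEnum.refl]; omega
  star := F.star

lemma ArcFam.rotate {E : HEnum G n} {S : Finset ι} {A : ι → Finset V}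
    (F : ArcFam E k good S A) (s : ℕ) (hs : s < n)
    (hsplit : ∀ i ∈ S, (∀ a ∈ A i, s ≤ E.c a) ∨ (∀ a ∈ A i, E.c a < s)) :
    ArcFam (E.rot s hs) k good S A where
  inner := by
    intro i hi a ha a' ha' h
    have h1 := E.c_lt a
    have h2 := E.c_lt a'
    rcases hsplit i hi with hsp | hsp
    · have s1 := hsp a ha
      have s2 := hsp a' ha'
      simp only [HEnum.rot, if_pos s1, if_pos s2] at h
      obtain ⟨g1, g2, g3, g4⟩ := F.inner i hi a ha a' ha' (by omega)
      simp only [HEnum.rot, if_pos s1, if_pos s2, Gap]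
      refine ⟨by omega, by omega, by omega, ?_⟩
      intro t ht1 ht2
      rw [if_pos (by omega)]
      exact g4 _ (by omega) (by omega)
    · have s1 : ¬ s ≤ E.c a := not_le.2 (hsp a ha)
      have s2 : ¬ s ≤ E.c a' := not_le.2 (hsp a' ha')
      simp only [HEnum.rot, if_neg s1, if_neg s2] at h
      obtain ⟨g1, g2, g3, g4⟩ := F.inner i hi a ha a' ha' (by omega)
      simp only [HEnum.rot, if_neg s1, if_neg s2, Gap]
      refine ⟨by omega, by omega, by omega, ?_⟩
      intro t ht1 ht2
      rw [if_neg (by omega)]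
      exact g4 _ (by omega) (by omega)
  order := by
    intro i hi j hj hij
    rcases hsplit i hi with h1 | h1 <;> rcases hsplit j hj with h2 | h2
    · rcases F.order i hi j hj hij with h | h
      · left
        intro a ha b hb
        have := h a ha b hb
        have := h1 a ha
        have := h2 b hb
        simp only [HEnum.rot, if_pos (h1 a ha), if_pos (h2 b hb)]; omega
      · right
        intro a ha b hb
        have := h a ha b hb
        have := h1 a ha
        have := h2 b hb
        simp only [HEnum.rot, if_pos (h1 a ha), if_pos (h2 b hb)]; omega
    · left
      intro a ha b hb
      have := h1 a ha
      have := h2 b hb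
      have := E.c_lt a
      simp only [HEnum.rot, if_pos (h1 a ha), if_neg (not_le.2 (h2 b hb))]; omega
    · right
      intro a ha b hb
      have := h1 a ha
      have := h2 b hb
      have := E.c_lt b
      simp only [HEnum.rot, if_neg (not_le.2 (h1 a ha)), if_pos (h2 b hb)]; omega
    · rcases F.order i hi j hj hij with h | h
      · left
        intro a ha b hb
        have := h a ha b hb
        simp only [HEnum.rot, if_neg (not_le.2 (h1 a ha)), if_neg (not_le.2 (h2 b hb))]; omega
      · right
        intro a ha b hb
        have := h a ha b hb
        simp only [HEnum.rot, if_neg (not_le.2 (h1 a ha)), if_neg (not_le.2 (h2 b hb))]; omega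
  star := F.star
end rot

section
variable {ι V : Type} [Fintype V] [DecidableEq V] {G : SimpleGraph V} {n k : ℕ}
  {good : V → Prop} {E : HEnum G n} {S : Finset ι} {A : ι → Finset V}

lemma low_lemma (hno : NoCyc G k good) (F : ArcFam E k good S A) {C : ι} (hC : C ∈ S)
    (S1 : Finset ι) (hS1 : S1 ⊆ S) (hCS : C ∉ S1)
    (v z : ι → V) (hv : ∀ i ∈ S1, v i ∈ A C) (hz : ∀ i ∈ S1, z i ∈ A i)
    (hadj : ∀ i ∈ S1, G.Adj (v i) (z i)) (B : ι → Finset V)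
    (hB : ∀ i ∈ S1, ∀ b ∈ B i, b ∈ A i ∧ E.c b < E.c (z i)) (V0 : Finset V)
    (hV0 : ∀ i ∈ S1, v i ∈ V0) :
    ∃ Del : Finset V,
      Del.card ≤ S1.card * ((Nat.log 2 S1.card + 2) * (Nat.log 2 V0.card + 2)) ∧
      ∀ i ∈ S1, ∀ j ∈ S1, v i ≠ v j → ∀ a ∈ B i, ∀ d ∈ B j, G.Adj a d → a ∈ Del ∨ d ∈ Del := by
  rcases S1.eq_empty_or_nonempty with rfl | ⟨i0, hi0⟩
  · exact ⟨∅, by simp, by simp⟩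
  obtain ⟨w, hw, hwmin⟩ := exists_min_image (A C) E.c ⟨_, hv i0 hi0⟩
  have hs : E.c w < n := E.c_lt w
  have hne : ∀ i, i ∈ S1 → i ≠ C := fun i hi h => hCS (h ▸ hi)
  have hsplit : ∀ i ∈ S, (∀ a ∈ A i, E.c w ≤ E.c a) ∨ (∀ a ∈ A i, E.c a < E.c w) := by
    intro i hi
    by_cases h : i = C
    · subst h; exact Or.inl hwmin
    · rcases F.order i hi C hC h with h1 | h1
      · right; exact fun a ha => h1 a ha w hw
      · left; exact fun a ha => (h1 a ha w hw).le
  have F' := F.rotate (E.c w) hs hsplit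
  refine low_first hno F' hC S1 hS1 ?_ v z hv hz hadj B ?_ V0 hV0
  · intro j hj a ha b hb
    have ha' := hwmin a ha
    have := E.c_lt a
    simp only [HEnum.rot, if_pos ha']
    by_cases hbw : E.c w ≤ E.c b
    · rw [if_pos hbw]
      rcases F.order j (hS1 hj) C hC (hne j hj) with h1 | h1
      · have := h1 b hb w hw; omega
      · have := h1 b hb a ha; omega
    · rw [if_neg hbw]; omega
  · intro i hi b hb
    obtain ⟨h1, h2⟩ := hB i hi b hb
    refine ⟨h1, ?_⟩
    simp only [HEnum.rot]
    rcases hsplit i (hS1 hi) with h3 | h3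
    · have := h3 b h1
      rw [if_pos (h3 b h1), if_pos (h3 _ (hz i hi))]; omega
    · rw [if_neg (not_le.2 (h3 b h1)), if_neg (not_le.2 (h3 _ (hz i hi)))]; omega

lemma high_lemma (hno : NoCyc G k good) (F : ArcFam E k good S A) {C : ι} (hC : C ∈ S)
    (S1 : Finset ι) (hS1 : S1 ⊆ S) (hCS : C ∉ S1)
    (v z : ι → V) (hv : ∀ i ∈ S1, v i ∈ A C) (hz : ∀ i ∈ S1, z i ∈ A i)
    (hadj : ∀ i ∈ S1, G.Adj (v i) (z i)) (B : ι → Finset V)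
    (hB : ∀ i ∈ S1, ∀ b ∈ B i, b ∈ A i ∧ E.c (z i) < E.c b) (V0 : Finset V)
    (hV0 : ∀ i ∈ S1, v i ∈ V0) :
    ∃ Del : Finset V,
      Del.card ≤ S1.card * ((Nat.log 2 S1.card + 2) * (Nat.log 2 V0.card + 2)) ∧
      ∀ i ∈ S1, ∀ j ∈ S1, v i ≠ v j → ∀ a ∈ B i, ∀ d ∈ B j, G.Adj a d → a ∈ Del ∨ d ∈ Del := by
  rcases S1.eq_empty_or_nonempty with rfl | ⟨i0, hi0⟩
  · exact ⟨∅, by simp, by simp⟩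
  have hn : 0 < n := (Nat.zero_le _).trans_lt (E.c_lt (v i0))
  refine low_lemma hno (F.reflect hn) hC S1 hS1 hCS v z hv hz hadj B ?_ V0 hV0
  intro i hi b hb
  obtain ⟨h1, h2⟩ := hB i hi b hb
  refine ⟨h1, ?_⟩
  have := E.c_lt b
  simp only [HEnum.refl]; omega
end


/-- triangular numbers -/
def tri : ℕ → ℕ
  | 0 => 0
  | n + 1 => tri n + n

lemma two_tri (n : ℕ) : 2 * tri (n + 1) = (n + 1) * n := by
  induction n with
  | zero => rfl
  | succ n ih => rw [tri, mul_add, ih]; ring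

lemma arith_y (α q y0 T : ℕ) (hy0 : 3 ≤ y0) (h0 : 4 * ((α + q * (y0 + 1)) * (y0 + 3)) ≤ T * 2 ^ y0) :
    ∀ y, y0 ≤ y → 4 * ((α + q * (y + 1)) * (y + 3)) ≤ T * 2 ^ y := by
  intro y hy
  induction y, hy using Nat.le_induction with
  | base => exact h0
  | succ y hy ih =>
    have h1 : (α + q * (y + 1 + 1)) * (y + 1 + 3) ≤ 2 * ((α + q * (y + 1)) * (y + 3)) := by
      obtain ⟨z, rfl⟩ : ∃ z, y = z + 3 := ⟨y - 3, by omega⟩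
      have : 0 ≤ α * z := Nat.zero_le _
      nlinarith [Nat.zero_le (q * z), Nat.zero_le (q * z * z), Nat.zero_le (α * z)]
    rw [pow_succ]
    nlinarith

lemma arith_r (r : ℕ) (hr : 4 ≤ r) : 3 * (8 + 6 * r + 2 * r ^ 2) ≤ 3 ^ (r + 1) := by
  induction r, hr using Nat.le_induction with
  | base => norm_num
  | succ r hr ih =>
    have h3 : 3 ^ (r + 1 + 1) = 3 * 3 ^ (r + 1) := by rw [pow_succ]; ring
    rw [h3]
    nlinarith

lemma le_of_pow_ge {x r b N : ℕ} (h : N ≤ x ^ r) (hb : b ^ r < N) : b + 1 ≤ x := by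
  by_contra hcon
  have : x ^ r ≤ b ^ r := Nat.pow_le_pow_left (by omega) r
  omega

lemma arith_main (r x : ℕ) (hr : 1 ≤ r) (hx : 9 ^ (r + 2) ≤ x ^ r) :
    4 * ((Nat.log 2 (2 * x * (2 * (16 ^ r * x ^ tri (r + 1)))) + 2) * (Nat.log 2 (2 * x) + 2))
      ≤ 3 ^ (r + 1) * x := by
  set y := Nat.log 2 x with hy
  have hx0 : x ≠ 0 := by
    rintro rfl
    rw [zero_pow (by omega)] at hx
    have : 0 < 9 ^ (r + 2) := by positivity
    omega
  have hyx : 2 ^ y ≤ x := Nat.pow_log_le_self 2 hx0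
  have hxy : x < 2 ^ (y + 1) := Nat.lt_pow_succ_log_self (by norm_num) x
  have hl1 : Nat.log 2 (2 * x) = y + 1 := by
    rw [mul_comm, Nat.log_mul_base (by norm_num) hx0]
  set q := tri (r + 1) + 1 with hq
  have hl2 : Nat.log 2 (2 * x * (2 * (16 ^ r * x ^ tri (r + 1)))) ≤ 2 + 4 * r + q * (y + 1) := by
    have : 2 * x * (2 * (16 ^ r * x ^ tri (r + 1))) ≤ 2 ^ (2 + 4 * r + q * (y + 1)) := by
      have e1 : 2 * x * (2 * (16 ^ r * x ^ tri (r + 1))) = 2 ^ (2 + 4 * r) * x ^ q := by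
        rw [hq, pow_succ, pow_add, pow_mul]; norm_num; ring
      rw [e1, pow_add _ (2 + 4 * r)]
      refine Nat.mul_le_mul_left _ ?_
      rw [mul_comm, pow_mul]
      exact Nat.pow_le_pow_left hxy.le q
    calc _ ≤ Nat.log 2 (2 ^ (2 + 4 * r + q * (y + 1))) := Nat.log_mono_right this
      _ = _ := Nat.log_pow (by norm_num) _
  have hgoal : 4 * ((4 + 4 * r + q * (y + 1)) * (y + 3)) ≤ 3 ^ (r + 1) * 2 ^ y := by
    have h2q := two_tri r
    rcases Nat.lt_or_ge r 4 with h4 | h4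
    · interval_cases r
      · have hq' : q = 2 := by omega
        have : 728 + 1 ≤ x := le_of_pow_ge hx (by norm_num)
        rw [hq']
        exact arith_y _ 2 9 _ (by norm_num) (by norm_num) y
          (Nat.le_log_of_pow_le (by norm_num) (by norm_num; omega))
      · have hq' : q = 4 := by omega
        have : 80 + 1 ≤ x := le_of_pow_ge hx (by norm_num)
        rw [hq']
        exact arith_y _ 4 6 _ (by norm_num) (by norm_num) y
          (Nat.le_log_of_pow_le (by norm_num) (by norm_num; omega))
      · have hq' : q = 7 := by omega
        have : 31 + 1 ≤ x := le_of_pow_ge hx (by norm_num)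
        rw [hq']
        exact arith_y _ 7 5 _ (by norm_num) (by norm_num) y
          (Nat.le_log_of_pow_le (by norm_num) (by norm_num; omega))
    · have : 9 + 1 ≤ x := le_of_pow_ge hx (Nat.pow_lt_pow_right (by norm_num) (by omega))
      refine arith_y _ q 3 _ le_rfl ?_ y (Nat.le_log_of_pow_le (by norm_num) (by norm_num; omega))
      have := arith_r r h4
      nlinarith
  calc _ ≤ 4 * ((4 + 4 * r + q * (y + 1)) * (y + 3)) := by
        rw [hl1]
        refine Nat.mul_le_mul_left _ (Nat.mul_le_mul ?_ ?_) <;> omega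
    _ ≤ 3 ^ (r + 1) * 2 ^ y := hgoal
    _ ≤ _ := Nat.mul_le_mul_left _ hyx

lemma coloring {ι : Type} (r : ℕ) (hr : 0 < r) (w : ι → ι → ℕ) (hw : ∀ i, w i i = 0)
    (S : Finset ι) : ∃ f : ι → Fin r,
      r * (∑ i ∈ S, ∑ j ∈ S, if f i = f j then w i j else 0) ≤ ∑ i ∈ S, ∑ j ∈ S, w i j := by
  classical
  induction S using Finset.induction_on with
  | empty => exact ⟨fun _ => ⟨0, hr⟩, by simp⟩
  | insert a S ha ih =>
    obtain ⟨f, hf⟩ := ih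
    have hcol : ∃ c : Fin r, r * (∑ j ∈ S, if f j = c then w a j + w j a else 0) ≤
        ∑ j ∈ S, (w a j + w j a) := by
      by_contra hcon
      push Not at hcon
      have : Nonempty (Fin r) := ⟨⟨0, hr⟩⟩
      have h1 := Finset.sum_lt_sum_of_nonempty (s := (univ : Finset (Fin r))) univ_nonempty
        (fun c _ => hcon c)
      have h2 : ∑ c : Fin r, (∑ j ∈ S, if f j = c then w a j + w j a else 0) =
          ∑ j ∈ S, (w a j + w j a) := by
        rw [sum_comm]; simp
      rw [← mul_sum, h2, sum_const, card_univ, Fintype.card_fin, smul_eq_mul] at h1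
      omega
    obtain ⟨c, hc⟩ := hcol
    refine ⟨Function.update f a c, ?_⟩
    have hne : ∀ j ∈ S, j ≠ a := fun j hj h => ha (h ▸ hj)
    have e1 : ∑ i ∈ insert a S, ∑ j ∈ insert a S, w i j =
        ∑ i ∈ S, ∑ j ∈ S, w i j + ∑ j ∈ S, (w a j + w j a) := by
      rw [sum_insert ha, sum_insert ha, hw]
      simp_rw [sum_insert ha, sum_add_distrib]
      ring
    have e2 : (∑ i ∈ insert a S, ∑ j ∈ insert a S,
          if Function.update f a c i = Function.update f a c j then w i j else 0) =
        (∑ i ∈ S, ∑ j ∈ S, if f i = f j then w i j else 0) +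
          ∑ j ∈ S, if f j = c then w a j + w j a else 0 := by
      rw [sum_insert ha, sum_insert ha, hw]
      simp_rw [sum_insert ha, sum_add_distrib]
      have q1 : ∑ j ∈ S, (if Function.update f a c a = Function.update f a c j then w a j else 0)
          = ∑ j ∈ S, if f j = c then w a j else 0 := by
        refine sum_congr rfl (fun j hj => ?_)
        simp [Function.update_of_ne (hne j hj), eq_comm]
      have q2 : ∑ j ∈ S, (if Function.update f a c j = Function.update f a c a then w j a else 0)
          = ∑ j ∈ S, if f j = c then w j a else 0 := by
        refine sum_congr rfl (fun j hj => ?_)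
        simp [Function.update_of_ne (hne j hj)]
      have q3 : ∑ i ∈ S, ∑ j ∈ S,
          (if Function.update f a c i = Function.update f a c j then w i j else 0)
          = ∑ i ∈ S, ∑ j ∈ S, if f i = f j then w i j else 0 := by
        refine sum_congr rfl (fun i hi => sum_congr rfl (fun j hj => ?_))
        simp [Function.update_of_ne (hne j hj), Function.update_of_ne (hne i hi)]
      rw [q1, q2, q3]
      have q4 : ∑ j ∈ S, (if f j = c then w a j + w j a else 0) =
          (∑ j ∈ S, if f j = c then w a j else 0) + ∑ j ∈ S, if f j = c then w j a else 0 := by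
        rw [← sum_add_distrib]
        refine sum_congr rfl (fun j _ => ?_)
        split_ifs <;> rfl
      rw [q4]
      simp
      ring
    rw [e1, e2, mul_add]
    exact Nat.add_le_add hf hc


def HasI {ι V : Type} (G : SimpleGraph V) (S : Finset ι) (A : ι → Finset V) (t : ℕ) : Prop :=
  ∃ I : Finset V, (∀ v ∈ I, ∃ i ∈ S, v ∈ A i) ∧ (∀ u ∈ I, ∀ v ∈ I, ¬ G.Adj u v) ∧ t ≤ I.card

lemma HasI.mono {ι V : Type} {G : SimpleGraph V} {S : Finset ι} {A : ι → Finset V} {t t' : ℕ}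
    (h : HasI G S A t) (ht : t' ≤ t) : HasI G S A t' := by
  obtain ⟨I, h1, h2, h3⟩ := h
  exact ⟨I, h1, h2, ht.trans h3⟩

def Cent {ι V : Type} (G : SimpleGraph V) (A : ι → Finset V) (i : ι) (v : V) (j : ι) : Prop :=
  v ∈ A i ∧ (∃ a ∈ A i, ∃ b ∈ A j, G.Adj a b) ∧ ∀ a ∈ A i, ∀ b ∈ A j, G.Adj a b → a = v

lemma Cent.unique {ι V : Type} {G : SimpleGraph V} {A : ι → Finset V} {i j : ι} {v w : V}
    (h : Cent G A i v j) (h' : Cent G A i w j) : v = w := by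
  obtain ⟨-, ⟨a, ha, b, hb, hab⟩, h1⟩ := h
  rw [← h1 a ha b hb hab, ← h'.2.2 a ha b hb hab]

section
variable {ι V : Type} [Fintype V] [DecidableEq V] {G : SimpleGraph V} {n k : ℕ}
  {good : V → Prop} {E : HEnum G n} {S : Finset ι} {A : ι → Finset V}

lemma cent_or (F : ArcFam E k good S A) {i j : ι} (hi : i ∈ S) (hj : j ∈ S) (hij : i ≠ j)
    {u w : V} (hu : u ∈ A i) (hw : w ∈ A j) (huw : G.Adj u w) :
    Cent G A i u j ∨ Cent G A j w i := by
  by_contra hcon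
  push Not at hcon
  obtain ⟨h1, h2⟩ := hcon
  have h1' : ∃ a ∈ A i, ∃ b ∈ A j, G.Adj a b ∧ a ≠ u := by
    by_contra hc
    push Not at hc
    exact h1 ⟨hu, ⟨u, hu, w, hw, huw⟩, hc⟩
  have h2' : ∃ b ∈ A j, ∃ a ∈ A i, G.Adj b a ∧ b ≠ w := by
    by_contra hc
    push Not at hc
    exact h2 ⟨hw, ⟨w, hw, u, hu, huw.symm⟩, hc⟩
  obtain ⟨a, ha, b, hb, hab, hau⟩ := h1'
  obtain ⟨b', hb', a', ha', hab', hbw⟩ := h2'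
  have k1 := (F.star i hi j hj hij a ha u hu b hb w hw hab huw).resolve_left hau
  have k2 := (F.star i hi j hj hij a' ha' u hu b' hb' w hw hab'.symm huw).resolve_right hbw
  rcases F.star i hi j hj hij a ha a' ha' b hb b' hb' hab hab'.symm with h | h
  · exact hau (h.trans k2)
  · exact hbw (h.symm.trans k1)

lemma arc_disj (F : ArcFam E k good S A) {i j : ι} (hi : i ∈ S) (hj : j ∈ S) (hij : i ≠ j) :
    Disjoint (A i) (A j) := by
  rw [disjoint_left]
  intro a ha hb
  rcases F.order i hi j hj hij with h | h
  · exact lt_irrefl _ (h a ha a hb)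
  · exact lt_irrefl _ (h a ha a hb)

lemma union_indep (hno : NoCyc G k good) (F : ArcFam E k good S A) {S0 : Finset ι}
    (hS0 : S0 ⊆ S) (B : ι → Finset V) (hB : ∀ i ∈ S0, B i ⊆ A i)
    (hcross : ∀ i ∈ S0, ∀ j ∈ S0, i ≠ j → ∀ a ∈ B i, ∀ b ∈ B j, ¬ G.Adj a b) :
    HasI G S A (∑ i ∈ S0, (B i).card) := by
  refine ⟨S0.biUnion B, ?_, ?_, ?_⟩
  · intro v hv
    rw [mem_biUnion] at hv
    obtain ⟨i, hi, hv⟩ := hv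
    exact ⟨i, hS0 hi, hB i hi hv⟩
  · intro u hu v hv huv
    rw [mem_biUnion] at hu hv
    obtain ⟨i, hi, hu⟩ := hu
    obtain ⟨j, hj, hv⟩ := hv
    by_cases hij : i = j
    · subst hij
      exact F.indep hno (hS0 hi) u (hB i hi hu) v (hB i hi hv) huv
    · exact hcross i hi j hj hij u hu v hv huv
  · rw [card_biUnion]
    intro i hi j hj hij
    exact (arc_disj F (hS0 hi) (hS0 hj) hij).mono (hB i hi) (hB j hj)

lemma tournament (hno : NoCyc G k good) (F : ArcFam E k good S A) (m : ℕ)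
    (hm : m ≤ S.card) (hA : ∀ i ∈ S, 2 * m ≤ (A i).card) : HasI G S A (m ^ 2) := by
  classical
  obtain ⟨S0, hS0, hc0⟩ := exists_subset_card_eq hm
  have hK : ∀ q : ι × ι, ∃ K : Finset V, K.card ≤ 1 ∧ (q.1 ∈ S → q.2 ∈ S → q.1 ≠ q.2 →
      ∀ a ∈ A q.1, ∀ b ∈ A q.2, G.Adj a b → a ∈ K ∨ b ∈ K) := by
    intro q
    by_cases h : q.1 ∈ S ∧ q.2 ∈ S ∧ q.1 ≠ q.2 ∧ ∃ a ∈ A q.1, ∃ b ∈ A q.2, G.Adj a b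
    · obtain ⟨h1, h2, h3, a, ha, b, hb, hab⟩ := h
      rcases cent_or F h1 h2 h3 ha hb hab with hc | hc
      · refine ⟨{a}, by simp, fun _ _ _ x hx y hy hxy => ?_⟩
        left; rw [mem_singleton]; exact hc.2.2 x hx y hy hxy
      · refine ⟨{b}, by simp, fun _ _ _ x hx y hy hxy => ?_⟩
        right; rw [mem_singleton]; exact hc.2.2 y hy x hx hxy.symm
    · refine ⟨∅, by simp, fun h1 h2 h3 a ha b hb hab => (h ⟨h1, h2, h3, a, ha, b, hb, hab⟩).elim⟩
  choose K hK1 hK2 using hK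
  set Del := (S0 ×ˢ S0).biUnion K with hDel
  have hDc : Del.card ≤ m * m := by
    refine (card_biUnion_le_card_mul _ _ 1 (fun q _ => hK1 q)).trans ?_
    rw [card_product, hc0, mul_one]
  have key := union_indep hno F hS0 (fun i => A i \ Del) (fun i _ => sdiff_subset) (by
    intro i hi j hj hij a ha b hb hab
    rw [mem_sdiff] at ha hb
    have hin : K (i, j) ⊆ Del := by
      intro v hv
      rw [hDel, mem_biUnion]
      exact ⟨(i, j), by simp [hi, hj], hv⟩
    rcases hK2 (i, j) (hS0 hi) (hS0 hj) hij a ha.1 b hb.1 hab with h | h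
    · exact ha.2 (hin h)
    · exact hb.2 (hin h))
  refine key.mono ?_
  have h1 : ∑ i ∈ S0, (A i).card ≤ ∑ i ∈ S0, (A i \ Del).card + Del.card := by
    have h2 : ∑ i ∈ S0, (A i ∩ Del).card ≤ Del.card := by
      rw [← card_biUnion]
      · apply card_le_card
        intro v hv
        rw [mem_biUnion] at hv
        obtain ⟨i, -, hv⟩ := hv
        exact (mem_inter.1 hv).2
      · intro i hi j hj hij
        exact (arc_disj F (hS0 hi) (hS0 hj) hij).mono inter_subset_left inter_subset_left
    calc ∑ i ∈ S0, (A i).card = ∑ i ∈ S0, ((A i \ Del).card + (A i ∩ Del).card) :=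
          sum_congr rfl (fun i _ => (card_sdiff_add_card_inter _ _).symm)
      _ = ∑ i ∈ S0, (A i \ Del).card + ∑ i ∈ S0, (A i ∩ Del).card := sum_add_distrib
      _ ≤ _ := by omega
  have h2 : m * (2 * m) ≤ ∑ i ∈ S0, (A i).card := by
    have := card_nsmul_le_sum S0 (fun i => (A i).card) (2 * m) (fun i hi => hA i (hS0 hi))
    rwa [hc0, smul_eq_mul] at this
  nlinarith

lemma poor_case (hno : NoCyc G k good) (F : ArcFam E k good S A) (M lam X : ℕ) (hM : 0 < M)
    (Rich : ι → V → Prop)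
    (hRich : ∀ i ∈ S, ∀ v ∈ A i, ¬ Rich i v → ∀ J : Finset ι, J ⊆ S →
      (∀ j ∈ J, j ≠ i ∧ Cent G A i v j) → J.card ≤ 4 * M)
    (hpoor : ∀ i ∈ S, ∃ P ⊆ A i, P.card = lam ∧ ∀ v ∈ P, ¬ Rich i v)
    (hS : 16 * M * X ≤ S.card * lam) : HasI G S A X := by
  classical
  have hP' : ∀ i, ∃ P : Finset V, i ∈ S → P ⊆ A i ∧ P.card = lam ∧ ∀ v ∈ P, ¬ Rich i v := by
    intro i
    by_cases hi : i ∈ S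
    · obtain ⟨P, h⟩ := hpoor i hi
      exact ⟨P, fun _ => h⟩
    · exact ⟨∅, fun h => (hi h).elim⟩
  choose P hP using hP'
  set w : ι → ι → ℕ := fun i j => ((P i).filter (fun v => j ≠ i ∧ Cent G A i v j)).card with hw
  obtain ⟨f, hf⟩ := coloring (8 * M) (by omega) w (by intro i; simp [hw]) S
  have htot : ∑ i ∈ S, ∑ j ∈ S, w i j ≤ S.card * (lam * (4 * M)) := by
    refine (sum_le_card_nsmul S _ (lam * (4 * M)) ?_).trans (by rw [smul_eq_mul])
    intro i hi
    have : ∑ j ∈ S, w i j = ∑ v ∈ P i, (S.filter (fun j => j ≠ i ∧ Cent G A i v j)).card := by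
      simp only [hw, card_filter]
      rw [sum_comm]
    rw [this]
    refine (sum_le_card_nsmul (P i) _ (4 * M) ?_).trans (by rw [smul_eq_mul, (hP i hi).2.1])
    intro v hv
    exact hRich i hi v ((hP i hi).1 hv) ((hP i hi).2.2 v hv) _ (filter_subset _ _)
      (fun j hj => (mem_filter.1 hj).2)
  set Bad : ι → V → Prop := fun i v => ∃ j ∈ S, f i = f j ∧ j ≠ i ∧ Cent G A i v j with hBad
  set Q : ι → Finset V := fun i => (P i).filter (fun v => ¬ Bad i v) with hQ
  have hbad : ∀ i ∈ S, lam ≤ (Q i).card + ∑ j ∈ S, if f i = f j then w i j else 0 := by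
    intro i hi
    rw [← (hP i hi).2.1, ← card_filter_add_card_filter_not (s := P i) (fun v => ¬ Bad i v)]
    refine Nat.add_le_add_left ?_ _
    have hsub : (P i).filter (fun v => ¬ ¬ Bad i v) ⊆
        (S.filter (fun j => f i = f j)).biUnion
          (fun j => (P i).filter (fun v => j ≠ i ∧ Cent G A i v j)) := by
      intro v hv
      rw [mem_filter, not_not] at hv
      obtain ⟨hv, j, hj, hfj, h1, h2⟩ := hv
      rw [mem_biUnion]
      exact ⟨j, mem_filter.2 ⟨hj, hfj⟩, mem_filter.2 ⟨hv, h1, h2⟩⟩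
    refine (card_le_card hsub).trans (card_biUnion_le.trans ?_)
    rw [sum_filter]
  have hsum := sum_le_sum hbad
  rw [sum_const, smul_eq_mul, sum_add_distrib] at hsum
  set mono := ∑ i ∈ S, ∑ j ∈ S, if f i = f j then w i j else 0 with hmono
  have hm2 : 2 * mono ≤ S.card * lam := by
    have h1 : 8 * M * mono ≤ S.card * (lam * (4 * M)) := hf.trans htot
    have h2 : (4 * M) * (2 * mono) ≤ (4 * M) * (S.card * lam) := by
      calc _ = 8 * M * mono := by ring
        _ ≤ _ := h1
        _ = _ := by ring
    exact Nat.le_of_mul_le_mul_left h2 (by omega)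
  have hcol : ∃ c : Fin (8 * M), X ≤ ∑ i ∈ S.filter (fun i => f i = c), (Q i).card := by
    by_contra hcon
    push Not at hcon
    have hne : Nonempty (Fin (8 * M)) := ⟨⟨0, by omega⟩⟩
    have h1 := Finset.sum_lt_sum_of_nonempty (s := (univ : Finset (Fin (8 * M)))) univ_nonempty
        (fun c _ => hcon c)
    rw [sum_fiberwise, sum_const, card_univ, Fintype.card_fin, smul_eq_mul] at h1
    have : 16 * M * X = 2 * (8 * M * X) := by ring
    omega
  obtain ⟨c, hc⟩ := hcol
  refine (union_indep hno F (S0 := S.filter (fun i => f i = c)) (filter_subset _ _) Q ?_ ?_).mono hc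
  · intro i hi
    exact (filter_subset _ _).trans (hP i (mem_filter.1 hi).1).1
  · intro i hi j hj hij a ha b hb hab
    rw [mem_filter] at hi hj
    simp only [hQ, mem_filter] at ha hb
    rcases cent_or F hi.1 hj.1 hij ((hP i hi.1).1 ha.1) ((hP j hj.1).1 hb.1) hab with h | h
    · exact ha.2 ⟨j, hj.1, hi.2.trans hj.2.symm, hij.symm, h⟩
    · exact hb.2 ⟨i, hi.1, hj.2.trans hi.2.symm, hij, h⟩

end


section
variable {ι V : Type} [Fintype V] [DecidableEq V] {G : SimpleGraph V} {n k : ℕ}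
  {good : V → Prop} {E : HEnum G n} {S : Finset ι} {A : ι → Finset V}

lemma families (F : ArcFam E k good S A) (x M T T0 Y Lg : ℕ) (V0 : Finset V)
    (J : V → Finset ι) (B : ι → Finset V) (Del : Finset V)
    (hV0 : V0.card = 2 * x) (hJS : ∀ v ∈ V0, J v ⊆ S) (hJc : ∀ v ∈ V0, (J v).card = 2 * M)
    (hJd : ∀ v ∈ V0, ∀ w ∈ V0, ∀ j, j ∈ J v → j ∈ J w → v = w)
    (hBA : ∀ v ∈ V0, ∀ j ∈ J v, B j ⊆ A j) (hBc : ∀ v ∈ V0, ∀ j ∈ J v, T0 + T ≤ (B j).card)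
    (hD : Del.card ≤ 2 * x * (2 * M) * Lg) (hLg : 4 * Lg ≤ T)
    (hcross : ∀ v ∈ V0, ∀ w ∈ V0, v ≠ w → ∀ i ∈ J v, ∀ j ∈ J w, ∀ a ∈ B i, ∀ d ∈ B j,
      G.Adj a d → a ∈ Del ∨ d ∈ Del)
    (IH : ∀ (S' : Finset ι) (A' : ι → Finset V), ArcFam E k good S' A' →
      (∀ i ∈ S', T0 ≤ (A' i).card) → M ≤ S'.card → HasI G S' A' Y) :
    HasI G S A (x * Y) := by
  classical
  set bad : V → Finset ι := fun v => (J v).filter (fun j => T < (B j ∩ Del).card) with hbad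
  have hsum : ∑ v ∈ V0, (bad v).card * (T + 1) ≤ Del.card := by
    calc ∑ v ∈ V0, (bad v).card * (T + 1) ≤ ∑ v ∈ V0, ∑ j ∈ bad v, (B j ∩ Del).card := by
          refine sum_le_sum (fun v _ => ?_)
          have := card_nsmul_le_sum (bad v) (fun j => (B j ∩ Del).card) (T + 1) (by
            intro j hj; exact (mem_filter.1 hj).2)
          rwa [smul_eq_mul] at this
      _ = ∑ v ∈ V0, ((bad v).biUnion (fun j => B j ∩ Del)).card := by
          refine sum_congr rfl (fun v hv => ?_)
          rw [card_biUnion]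
          intro i hi j hj hij
          have hi' := (mem_filter.1 hi).1
          have hj' := (mem_filter.1 hj).1
          exact (arc_disj F (hJS v hv hi') (hJS v hv hj') hij).mono
            (inter_subset_left.trans (hBA v hv i hi')) (inter_subset_left.trans (hBA v hv j hj'))
      _ = (V0.biUnion (fun v => (bad v).biUnion (fun j => B j ∩ Del))).card := by
          rw [card_biUnion]
          intro v hv w hw hvw
          simp only [disjoint_biUnion_left, disjoint_biUnion_right]
          intro i hi j hj
          have hi' := (mem_filter.1 hi).1
          have hj' := (mem_filter.1 hj).1
          have hij : j ≠ i := by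
            rintro rfl
            exact hvw (hJd v hv w hw _ (by assumption) (by assumption))
          first
          | exact (arc_disj F (hJS v hv hj') (hJS w hw hi') hij).mono
              (inter_subset_left.trans (hBA v hv _ hj')) (inter_subset_left.trans (hBA w hw _ hi'))
          | exact (arc_disj F (hJS v hv hi') (hJS w hw hj') hij.symm).mono
              (inter_subset_left.trans (hBA v hv _ hi')) (inter_subset_left.trans (hBA w hw _ hj'))
      _ ≤ Del.card := by
          apply card_le_card
          intro a ha
          simp only [mem_biUnion, mem_inter] at ha
          obtain ⟨v, -, j, -, -, h⟩ := ha
          exact h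
  rw [← sum_mul] at hsum
  have hb : ∑ v ∈ V0, (bad v).card ≤ x * M := by
    have h1 : (∑ v ∈ V0, (bad v).card) * (T + 1) ≤ (x * M) * (T + 1) := by
      calc _ ≤ 2 * x * (2 * M) * Lg := hsum.trans hD
        _ = x * M * (4 * Lg) := by ring
        _ ≤ x * M * (T + 1) := Nat.mul_le_mul_left _ (by omega)
    exact Nat.le_of_mul_le_mul_right h1 (by omega)
  set Vb := V0.filter (fun v => M < (bad v).card) with hVb
  set Vg := V0.filter (fun v => ¬ M < (bad v).card) with hVg
  have hcc : Vb.card + Vg.card = 2 * x := by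
    rw [← hV0]; exact card_filter_add_card_filter_not _
  have hVbc : Vb.card ≤ x := by
    have h1 : Vb.card * (M + 1) ≤ x * M := by
      have := card_nsmul_le_sum Vb (fun v => (bad v).card) (M + 1)
        (fun v hv => (mem_filter.1 hv).2)
      rw [smul_eq_mul] at this
      exact this.trans ((sum_le_sum_of_subset (filter_subset _ _)).trans hb)
    have h2 : Vb.card * (M + 1) ≤ x * (M + 1) := h1.trans (Nat.mul_le_mul_left _ (by omega))
    exact Nat.le_of_mul_le_mul_right h2 (by omega)
  set K : V → Finset ι := fun v => (J v).filter (fun j => ¬ T < (B j ∩ Del).card) with hK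
  have hI : ∀ v, ∃ I : Finset V, v ∈ Vg → (∀ a ∈ I, ∃ j ∈ K v, a ∈ B j \ Del) ∧
      (∀ a ∈ I, ∀ b ∈ I, ¬ G.Adj a b) ∧ Y ≤ I.card := by
    intro v
    by_cases hv : v ∈ Vg
    · have hv0 : v ∈ V0 := (mem_filter.1 hv).1
      have hvb := (mem_filter.1 hv).2
      have hKJ : K v ⊆ J v := filter_subset _ _
      obtain ⟨I, h1, h2, h3⟩ := IH (K v) (fun j => B j \ Del)
        ((F.mono (hKJ.trans (hJS v hv0)) (A' := fun j => B j \ Del)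
          (fun j hj => sdiff_subset.trans (hBA v hv0 j (hKJ hj))))) (by
          intro j hj
          have h1 := (mem_filter.1 hj).2
          have h2 := hBc v hv0 j (hKJ hj)
          have h3 := card_sdiff_add_card_inter (B j) Del
          show T0 ≤ (B j \ Del).card
          omega) (by
          have h1 : (bad v).card + (K v).card = (J v).card := card_filter_add_card_filter_not _
          rw [hJc v hv0] at h1
          omega)
      exact ⟨I, fun _ => ⟨h1, h2, h3⟩⟩
    · exact ⟨∅, fun h => (hv h).elim⟩
  choose I hI using hI
  have hVgV : ∀ v ∈ Vg, v ∈ V0 := fun v hv => (mem_filter.1 hv).1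
  have hKJ : ∀ v, K v ⊆ J v := fun v => filter_subset _ _
  refine ⟨Vg.biUnion I, ?_, ?_, ?_⟩
  · intro a ha
    rw [mem_biUnion] at ha
    obtain ⟨v, hv, ha⟩ := ha
    obtain ⟨j, hj, haj⟩ := (hI v hv).1 a ha
    exact ⟨j, hJS v (hVgV v hv) (hKJ v hj), hBA v (hVgV v hv) j (hKJ v hj) (mem_sdiff.1 haj).1⟩
  · intro a ha b hb hab
    rw [mem_biUnion] at ha hb
    obtain ⟨v, hv, ha⟩ := ha
    obtain ⟨w, hw, hb⟩ := hb
    by_cases hvw : v = w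
    · subst hvw
      exact (hI v hv).2.1 a ha b hb hab
    · obtain ⟨i, hi, hai⟩ := (hI v hv).1 a ha
      obtain ⟨j, hj, hbj⟩ := (hI w hw).1 b hb
      rw [mem_sdiff] at hai hbj
      rcases hcross v (hVgV v hv) w (hVgV w hw) hvw i (hKJ v hi) j (hKJ w hj) a hai.1 b hbj.1 hab
        with h | h
      · exact hai.2 h
      · exact hbj.2 h
  · rw [card_biUnion]
    · have := card_nsmul_le_sum Vg (fun v => (I v).card) Y (fun v hv => (hI v hv).2.2)
      rw [smul_eq_mul] at this
      exact (Nat.mul_le_mul_right _ (by omega)).trans this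
    · intro v hv w hw hvw
      simp only [Finset.mem_coe] at hv hw
      rw [Function.onFun, disjoint_left]
      intro a ha hb
      obtain ⟨i, hi, hai⟩ := (hI v hv).1 a ha
      obtain ⟨j, hj, hbj⟩ := (hI w hw).1 a hb
      have hij : i ≠ j := by
        rintro rfl
        exact hvw (hJd v (hVgV v hv) w (hVgV w hw) _ (hKJ v hi) (hKJ w hj))
      exact disjoint_left.1 (arc_disj F (hJS v (hVgV v hv) (hKJ v hi))
        (hJS w (hVgV w hw) (hKJ w hj)) hij)
        (hBA v (hVgV v hv) i (hKJ v hi) (mem_sdiff.1 hai).1)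
        (hBA w (hVgV w hw) j (hKJ w hj) (mem_sdiff.1 hbj).1)

lemma rich_type (F : ArcFam E k good S A) {C : ι} (x M T T0 Y : ℕ)
    (vf : ι → V) (B : ι → Finset V) (V1 : Finset V) (J : V → Finset ι)
    (hV1 : 2 * x ≤ V1.card) (hJS : ∀ v ∈ V1, J v ⊆ S) (hJc : ∀ v ∈ V1, 2 * M ≤ (J v).card)
    (hJC : ∀ v ∈ V1, ∀ j ∈ J v, j ≠ C ∧ vf j = v)
    (hBA : ∀ v ∈ V1, ∀ j ∈ J v, B j ⊆ A j) (hBc : ∀ v ∈ V1, ∀ j ∈ J v, T0 + T ≤ (B j).card)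
    (hLg : 4 * ((Nat.log 2 (2 * x * (2 * M)) + 2) * (Nat.log 2 (2 * x) + 2)) ≤ T)
    (hDel : ∀ S1 : Finset ι, S1 ⊆ S → C ∉ S1 → (∀ j ∈ S1, ∃ v ∈ V1, j ∈ J v) → ∀ V0 : Finset V,
      (∀ j ∈ S1, vf j ∈ V0) → ∃ Del : Finset V,
      Del.card ≤ S1.card * ((Nat.log 2 S1.card + 2) * (Nat.log 2 V0.card + 2)) ∧
      ∀ i ∈ S1, ∀ j ∈ S1, vf i ≠ vf j → ∀ a ∈ B i, ∀ d ∈ B j, G.Adj a d → a ∈ Del ∨ d ∈ Del)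
    (IH : ∀ (S' : Finset ι) (A' : ι → Finset V), ArcFam E k good S' A' →
      (∀ i ∈ S', T0 ≤ (A' i).card) → M ≤ S'.card → HasI G S' A' Y) :
    HasI G S A (x * Y) := by
  classical
  obtain ⟨V0, hV01, hV0c⟩ := exists_subset_card_eq hV1
  have hJ' : ∀ v, ∃ K : Finset ι, v ∈ V1 → K ⊆ J v ∧ K.card = 2 * M := by
    intro v
    by_cases hv : v ∈ V1
    · obtain ⟨K, h⟩ := exists_subset_card_eq (hJc v hv)
      exact ⟨K, fun _ => h⟩
    · exact ⟨∅, fun h => (hv h).elim⟩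
  choose K hK using hJ'
  have hKJ : ∀ v ∈ V0, K v ⊆ J v := fun v hv => (hK v (hV01 hv)).1
  have hKd : ∀ v ∈ V0, ∀ w ∈ V0, ∀ j, j ∈ K v → j ∈ K w → v = w := by
    intro v hv w hw j h1 h2
    rw [← (hJC v (hV01 hv) j (hKJ v hv h1)).2, ← (hJC w (hV01 hw) j (hKJ w hw h2)).2]
  set S1 := V0.biUnion K with hS1
  have hS1c : S1.card = 2 * x * (2 * M) := by
    rw [hS1, card_biUnion]
    · rw [sum_congr rfl (fun v hv => (hK v (hV01 hv)).2), sum_const, hV0c, smul_eq_mul]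
    · intro v hv w hw hvw
      rw [Function.onFun, disjoint_left]
      intro j h1 h2
      exact hvw (hKd v hv w hw j h1 h2)
  have hmem : ∀ j ∈ S1, ∃ v ∈ V0, j ∈ K v := fun j hj => by simpa [hS1] using hj
  obtain ⟨Del, hD1, hD2⟩ := hDel S1 (by
      intro j hj
      obtain ⟨v, hv, hj⟩ := hmem j hj
      exact hJS v (hV01 hv) (hKJ v hv hj)) (by
      intro hj
      obtain ⟨v, hv, hj⟩ := hmem C hj
      exact (hJC v (hV01 hv) C (hKJ v hv hj)).1 rfl) (by
      intro j hj
      obtain ⟨v, hv, hj⟩ := hmem j hj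
      exact ⟨v, hV01 hv, hKJ v hv hj⟩) V0 (by
      intro j hj
      obtain ⟨v, hv, hj⟩ := hmem j hj
      rw [(hJC v (hV01 hv) j (hKJ v hv hj)).2]
      exact hv)
  rw [hS1c, hV0c] at hD1
  refine families F x M T T0 Y _ V0 K B Del hV0c
    (fun v hv => (hKJ v hv).trans (hJS v (hV01 hv)))
    (fun v hv => (hK v (hV01 hv)).2) hKd (fun v hv j hj => hBA v (hV01 hv) j (hKJ v hv hj))
    (fun v hv j hj => hBc v (hV01 hv) j (hKJ v hv hj)) hD1 hLg ?_ IH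
  intro v hv w hw hvw i hi j hj a ha d hd had
  refine hD2 i (mem_biUnion.2 ⟨v, hv, hi⟩) j (mem_biUnion.2 ⟨w, hw, hj⟩) ?_ a ha d hd had
  rw [(hJC v (hV01 hv) i (hKJ v hv hi)).2, (hJC w (hV01 hw) j (hKJ w hw hj)).2]
  exact hvw

lemma rich_case (hno : NoCyc G k good) (F : ArcFam E k good S A) {C : ι} (hC : C ∈ S)
    (x M T T0 Y : ℕ)
    (hA : ∀ i ∈ S, 2 * (T0 + T) ≤ (A i).card)
    (R : Finset V) (hR : 4 * x ≤ R.card)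
    (hRich : ∀ v ∈ R, ∃ J ⊆ S, (∀ j ∈ J, j ≠ C ∧ Cent G A C v j) ∧ 4 * M ≤ J.card)
    (hLg : 4 * ((Nat.log 2 (2 * x * (2 * M)) + 2) * (Nat.log 2 (2 * x) + 2)) ≤ T)
    (IH : ∀ (S' : Finset ι) (A' : ι → Finset V), ArcFam E k good S' A' →
      (∀ i ∈ S', T0 ≤ (A' i).card) → M ≤ S'.card → HasI G S' A' Y) :
    HasI G S A (x * Y) := by
  classical
  rcases R.eq_empty_or_nonempty with hRe | ⟨v0, hv0⟩
  · have : x = 0 := by rw [hRe, card_empty] at hR; omega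
    subst this
    exact ⟨∅, by simp, by simp, by simp⟩
  have hJ' : ∀ v, ∃ J : Finset ι, v ∈ R → J ⊆ S ∧ (∀ j ∈ J, j ≠ C ∧ Cent G A C v j) ∧
      4 * M ≤ J.card := by
    intro v
    by_cases hv : v ∈ R
    · obtain ⟨J, h⟩ := hRich v hv
      exact ⟨J, fun _ => h⟩
    · exact ⟨∅, fun h => (hv h).elim⟩
  choose J hJ using hJ'
  have hz' : ∀ j, ∃ q : V × V, (∃ v, Cent G A C v j) →
      Cent G A C q.1 j ∧ q.2 ∈ A j ∧ G.Adj q.1 q.2 := by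
    intro j
    by_cases h : ∃ v, Cent G A C v j
    · obtain ⟨v, hv⟩ := h
      obtain ⟨a, ha, b, hb, hab⟩ := hv.2.1
      have : a = v := hv.2.2 a ha b hb hab
      subst this
      exact ⟨(a, b), fun _ => ⟨hv, hb, hab⟩⟩
    · exact ⟨(v0, v0), fun h' => (h h').elim⟩
  choose q hq using hz'
  set Blo : ι → Finset V := fun j => (A j).filter (fun b => E.c b < E.c (q j).2) with hBlo
  set Bhi : ι → Finset V := fun j => (A j).filter (fun b => E.c (q j).2 < E.c b) with hBhi
  have hsz : ∀ j ∈ S, (∃ v, Cent G A C v j) → T0 + T ≤ (Blo j).card ∨ T0 + T ≤ (Bhi j).card := by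
    intro j hj hv
    have h1 : A j ⊆ Blo j ∪ Bhi j ∪ {(q j).2} := by
      intro b hb
      simp only [mem_union, mem_singleton, hBlo, hBhi, mem_filter]
      rcases lt_trichotomy (E.c b) (E.c (q j).2) with h | h | h
      · exact Or.inl (Or.inl ⟨hb, h⟩)
      · right; rw [← E.uc b, h, E.uc]
      · exact Or.inl (Or.inr ⟨hb, h⟩)
    have h2 := card_le_card h1
    have h3 := card_union_le (Blo j ∪ Bhi j) {(q j).2}
    have h4 := card_union_le (Blo j) (Bhi j)
    rw [card_singleton] at h3
    have := hA j hj
    omega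
  set Low : ι → Prop := fun j => T0 + T ≤ (Blo j).card with hLow
  set JL : V → Finset ι := fun v => (J v).filter Low with hJL
  set JH : V → Finset ι := fun v => (J v).filter (fun j => ¬ Low j) with hJH
  have hJLH : ∀ v, (JL v).card + (JH v).card = (J v).card := fun v =>
    card_filter_add_card_filter_not _
  have hR2 : (R.filter (fun v => 2 * M ≤ (JL v).card)).card +
      (R.filter (fun v => ¬ 2 * M ≤ (JL v).card)).card = R.card :=
    card_filter_add_card_filter_not _
  have hJq : ∀ v ∈ R, ∀ j ∈ J v, j ∈ S ∧ j ≠ C ∧ (q j).1 = v ∧ (q j).1 ∈ A C ∧ (q j).2 ∈ A j ∧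
      G.Adj (q j).1 (q j).2 ∧ (Low j ∨ T0 + T ≤ (Bhi j).card) := by
    intro v hv j hj
    obtain ⟨h1, h2⟩ := (hJ v hv).2.1 j hj
    obtain ⟨h3, h4, h5⟩ := hq j ⟨v, h2⟩
    exact ⟨(hJ v hv).1 hj, h1, h3.unique h2, h3.1, h4, h5, hsz j ((hJ v hv).1 hj) ⟨v, h2⟩⟩
  rcases (by omega : 2 * x ≤ (R.filter (fun v => 2 * M ≤ (JL v).card)).card ∨
    2 * x ≤ (R.filter (fun v => ¬ 2 * M ≤ (JL v).card)).card) with h | h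
  · have hVR : ∀ v ∈ R.filter (fun v => 2 * M ≤ (JL v).card), v ∈ R :=
      fun v hv => (mem_filter.1 hv).1
    have hJJ : ∀ v, JL v ⊆ J v := fun v => filter_subset _ _
    refine rich_type F (C := C) x M T T0 Y (fun j => (q j).1) Blo _ JL h
      (fun v hv => (hJJ v).trans (hJ v (hVR v hv)).1) (fun v hv => (mem_filter.1 hv).2)
      (fun v hv j hj => ?_) (fun v hv j hj => filter_subset _ _)
      (fun v hv j hj => (mem_filter.1 hj).2) hLg ?_ IH
    · have := hJq v (hVR v hv) j (hJJ v hj)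
      exact ⟨this.2.1, this.2.2.1⟩
    · intro S1 hS1 hCS hm V0 hV0
      have hm' : ∀ j ∈ S1, (q j).1 ∈ A C ∧ (q j).2 ∈ A j ∧ G.Adj (q j).1 (q j).2 := by
        intro j hj
        obtain ⟨v, hv, hjv⟩ := hm j hj
        have := hJq v (hVR v hv) j (hJJ v hjv)
        exact ⟨this.2.2.2.1, this.2.2.2.2.1, this.2.2.2.2.2.1⟩
      exact low_lemma hno F hC S1 hS1 hCS (fun j => (q j).1) (fun j => (q j).2)
        (fun j hj => (hm' j hj).1) (fun j hj => (hm' j hj).2.1) (fun j hj => (hm' j hj).2.2) Blo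
        (fun j hj b hb => mem_filter.1 hb) V0 hV0
  · have hVR : ∀ v ∈ R.filter (fun v => ¬ 2 * M ≤ (JL v).card), v ∈ R :=
      fun v hv => (mem_filter.1 hv).1
    have hJJ : ∀ v, JH v ⊆ J v := fun v => filter_subset _ _
    refine rich_type F (C := C) x M T T0 Y (fun j => (q j).1) Bhi _ JH h
      (fun v hv => (hJJ v).trans (hJ v (hVR v hv)).1) (fun v hv => ?_)
      (fun v hv j hj => ?_) (fun v hv j hj => filter_subset _ _)
      (fun v hv j hj => ?_) hLg ?_ IH
    · have h1 := (mem_filter.1 hv).2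
      have h2 := hJLH v
      have h3 := (hJ v (hVR v hv)).2.2
      omega
    · have := hJq v (hVR v hv) j (hJJ v hj)
      exact ⟨this.2.1, this.2.2.1⟩
    · have := hJq v (hVR v hv) j (hJJ v hj)
      exact this.2.2.2.2.2.2.resolve_left (mem_filter.1 hj).2
    · intro S1 hS1 hCS hm V0 hV0
      have hm' : ∀ j ∈ S1, (q j).1 ∈ A C ∧ (q j).2 ∈ A j ∧ G.Adj (q j).1 (q j).2 := by
        intro j hj
        obtain ⟨v, hv, hjv⟩ := hm j hj
        have := hJq v (hVR v hv) j (hJJ v hjv)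
        exact ⟨this.2.2.2.1, this.2.2.2.2.1, this.2.2.2.2.2.1⟩
      exact high_lemma hno F hC S1 hS1 hCS (fun j => (q j).1) (fun j => (q j).2)
        (fun j hj => (hm' j hj).1) (fun j hj => (hm' j hj).2.1) (fun j hj => (hm' j hj).2.2) Bhi
        (fun j hj b hb => mem_filter.1 hb) V0 hV0
end

lemma claim {ι V : Type} [Fintype V] [DecidableEq V] {G : SimpleGraph V} {n k : ℕ}
    {good : V → Prop} {E : HEnum G n} (hno : NoCyc G k good) (x : ℕ) (hx : 1 ≤ x) (s : ℕ) :
    ∀ (S : Finset ι) (A : ι → Finset V), ArcFam E k good S A →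
      (∀ i ∈ S, 2 * (3 ^ (s + 1) * x) ≤ (A i).card) → 16 ^ s * x ^ tri (s + 1) ≤ S.card →
      HasI G S A (x ^ (s + 1) + 1) := by
  classical
  induction s with
  | zero =>
    intro S A F hA hS
    have h1 : 0 < S.card := lt_of_lt_of_le (by positivity) hS
    obtain ⟨i, hi⟩ := card_pos.1 h1
    have := union_indep hno F (S0 := {i}) (by simpa using hi) A (fun _ _ => Subset.rfl) (by
      intro a ha b hb hab
      rw [mem_singleton] at ha hb
      exact (hab (ha.trans hb.symm)).elim)
    refine this.mono ?_
    have := hA i hi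
    simp at this ⊢
    omega
  | succ r ih =>
    intro S A F hA hS
    have hpos : ∀ e, 1 ≤ x ^ e := fun e => Nat.one_le_pow _ _ hx
    have h16 : 3 ^ (r + 2) ≤ 16 ^ (r + 1) := by
      calc 3 ^ (r + 2) = 3 * 3 ^ (r + 1) := by ring
        _ ≤ 16 ^ (r + 1) := by
          clear * -
          induction r with
          | zero => norm_num
          | succ r ih => rw [pow_succ 3, pow_succ 16]; omega
    have hxt : x ≤ x ^ tri (r + 2) := by
      calc x = x ^ 1 := (pow_one x).symm
        _ ≤ _ := Nat.pow_le_pow_right hx (by rw [tri]; omega)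
    have htour := tournament hno F (3 ^ (r + 2) * x) ((Nat.mul_le_mul h16 hxt).trans hS) hA
    by_cases hbig : x ^ (r + 1 + 1) + 1 ≤ (3 ^ (r + 2) * x) ^ 2
    · exact htour.mono hbig
    have hsq : (3 ^ (r + 2) * x) ^ 2 = 9 ^ (r + 2) * x ^ 2 := by
      rw [mul_pow, ← pow_mul, mul_comm (r + 2) 2, pow_mul]; norm_num
    have hx9 : 9 ^ (r + 2) ≤ x ^ r := by
      rw [hsq] at hbig
      have h1 : 9 ^ (r + 2) * x ^ 2 ≤ x ^ r * x ^ 2 := by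
        rw [← pow_add]
        have : x ^ (r + 1 + 1) = x ^ (r + 2) := rfl
        omega
      exact Nat.le_of_mul_le_mul_right h1 (by positivity)
    have hr : 1 ≤ r := by
      rcases Nat.eq_zero_or_pos r with rfl | h
      · norm_num at hx9
      · exact h
    set M := 16 ^ r * x ^ tri (r + 1) with hM
    have hMpos : 0 < M := by positivity
    have hSM : 16 * M * x ^ (r + 1) ≤ S.card := by
      refine le_trans (le_of_eq ?_) hS
      have ht : tri (r + 1 + 1) = tri (r + 1) + (r + 1) := rfl
      rw [hM, ht, pow_add x (tri (r + 1)), pow_succ 16 r]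
      ring
    set Rich : ι → V → Prop := fun i v =>
      ∃ J ⊆ S, (∀ j ∈ J, j ≠ i ∧ Cent G A i v j) ∧ 4 * M ≤ J.card with hRich
    by_cases hrich : ∃ C ∈ S, 3 ^ (r + 2) * x ≤ ((A C).filter (Rich C)).card
    · obtain ⟨C, hC, hCc⟩ := hrich
      have e3 : 3 ^ (r + 1 + 1) = 3 * 3 ^ (r + 1) := by ring
      have := rich_case hno F hC x M (3 ^ (r + 1) * x) (2 * (3 ^ (r + 1) * x)) (x ^ (r + 1) + 1)
        (by
          intro i hi
          have := hA i hi
          rw [e3, mul_assoc] at this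
          omega) ((A C).filter (Rich C)) (by
          have : 9 ≤ 3 ^ (r + 2) := by
            calc 9 = 3 ^ 2 := by norm_num
              _ ≤ _ := Nat.pow_le_pow_right (by norm_num) (by omega)
          nlinarith) (fun v hv => (mem_filter.1 hv).2) (arith_main r x hr hx9) ih
      refine this.mono ?_
      rw [pow_succ x (r + 1)]
      nlinarith
    · push Not at hrich
      refine poor_case hno F M (3 ^ (r + 2) * x) _ hMpos Rich ?_ ?_ ?_
      · intro i hi v hv hnr J hJ hJ2
        by_contra hcon
        exact hnr ⟨J, hJ, hJ2, by omega⟩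
      · intro i hi
        have h1 : ((A i).filter (Rich i)).card + ((A i).filter (fun v => ¬ Rich i v)).card =
          (A i).card := card_filter_add_card_filter_not _
        have h2 := hA i hi
        have h3 := hrich i hi
        have h4 : 3 ^ (r + 2) * x ≤ ((A i).filter (fun v => ¬ Rich i v)).card := by
          have : 3 ^ (r + 1 + 1) = 3 ^ (r + 2) := rfl
          rw [this] at h2
          omega
        obtain ⟨P, hP1, hP2⟩ := exists_subset_card_eq h4
        exact ⟨P, hP1.trans (filter_subset _ _), hP2, fun v hv => (mem_filter.1 (hP1 hv)).2⟩
      · have h1 : x ^ (r + 1 + 1) + 1 ≤ x ^ (r + 1) * (3 ^ (r + 2) * x) := by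
          have : x ^ (r + 1) * (3 ^ (r + 2) * x) = 3 ^ (r + 2) * x ^ (r + 1 + 1) := by ring
          rw [this]
          have h9 : 9 ≤ 3 ^ (r + 2) := by
            calc 9 = 3 ^ 2 := by norm_num
              _ ≤ _ := Nat.pow_le_pow_right (by norm_num) (by omega)
          have := hpos (r + 1 + 1)
          nlinarith
        calc 16 * M * (x ^ (r + 1 + 1) + 1) ≤ 16 * M * (x ^ (r + 1) * (3 ^ (r + 2) * x)) :=
              Nat.mul_le_mul_left _ h1
          _ = 16 * M * x ^ (r + 1) * (3 ^ (r + 2) * x) := by ring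
          _ ≤ _ := Nat.mul_le_mul_right _ hSM


noncomputable def mkEnum {V : Type} [Fintype V] {G : SimpleGraph V} {n : ℕ} [NeZero n]
    {σ : ZMod n → V} (hσ : IsHamOrder G n σ) (i0 : ZMod n) : HEnum G n where
  u := fun i => σ (i0 + (i : ZMod n))
  c := fun v => ((Equiv.ofBijective σ hσ.1).symm v - i0).val
  c_lt := fun v => ZMod.val_lt _
  uc := by
    intro v
    rw [ZMod.natCast_zmod_val, add_sub_cancel]
    exact (Equiv.ofBijective σ hσ.1).apply_symm_apply v
  cu := by
    intro i hi
    have : (Equiv.ofBijective σ hσ.1).symm (σ (i0 + (i : ZMod n))) = i0 + (i : ZMod n) :=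
      (Equiv.ofBijective σ hσ.1).symm_apply_apply _
    rw [this, add_sub_cancel_left, ZMod.val_natCast_of_lt hi]
  adj := by
    intro i _
    have := hσ.2 (i0 + (i : ZMod n))
    rwa [add_assoc, ← Nat.cast_succ] at this
  wrap := by
    have := hσ.2 (i0 + ((n - 1 : ℕ) : ZMod n))
    have hn : n - 1 + 1 = n := Nat.succ_pred_eq_of_pos (NeZero.pos n)
    rwa [add_assoc, ← Nat.cast_succ, Nat.succ_eq_add_one, hn, ZMod.natCast_self,
      ← Nat.cast_zero] at this

lemma mkEnum_u {V : Type} [Fintype V] {G : SimpleGraph V} {n : ℕ} [NeZero n]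
    {σ : ZMod n → V} (hσ : IsHamOrder G n σ) (i0 : ZMod n) (i : ℕ) :
    (mkEnum hσ i0).u i = σ (i0 + (i : ZMod n)) := rfl

/-- each closure is an interval, provided it does not wrap around the base point -/
lemma arc_interval {V : Type} [Fintype V] [DecidableEq V] {G : SimpleGraph V} {n k : ℕ} [NeZero n]
    {σ : ZMod n → V} (hσ : IsHamOrder G n σ) (hcard : Fintype.card V = n) (hk : k < n)
    (i0 : ZMod n) (D : Finset V) (i : ZMod n) (m : ℕ)
    (hD : D = (Finset.range m).image (fun j : ℕ => σ (i + (j : ZMod n))))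
    (hDk : D.card ≤ k) (h0 : σ i0 ∈ D → i = i0) :
    ∃ s m : ℕ, s + m ≤ n ∧ m ≤ k ∧
      ∀ v, v ∈ D ↔ s ≤ (mkEnum hσ i0).c v ∧ (mkEnum hσ i0).c v < s + m := by
  have hmn : m < n := by
    by_contra hcon
    push Not at hcon
    have : D = univ := by
      rw [eq_univ_iff_forall]
      intro v
      obtain ⟨j, rfl⟩ := hσ.1.2 v
      rw [hD, mem_image]
      refine ⟨(j - i).val, mem_range.2 ((ZMod.val_lt _).trans_le hcon), ?_⟩
      rw [ZMod.natCast_zmod_val, add_sub_cancel]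
    rw [this, card_univ] at hDk
    omega
  have hm : m ≤ k := by
    rw [hD, card_image_of_injOn, card_range] at hDk
    · exact hDk
    · intro a ha b hb hab
      have ha' := mem_range.1 ha
      have hb' := mem_range.1 hb
      have h1 := add_left_cancel (hσ.1.1 hab)
      have h2 := congrArg ZMod.val h1
      rwa [ZMod.val_natCast_of_lt (by omega), ZMod.val_natCast_of_lt (by omega)] at h2
  set s := (i - i0).val with hs
  have hsi : i0 + (s : ZMod n) = i := by rw [hs, ZMod.natCast_zmod_val, add_sub_cancel]
  have hsn : s < n := ZMod.val_lt _
  have hwrap : s + m ≤ n := by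
    by_contra hcon
    push Not at hcon
    have : σ i0 ∈ D := by
      rw [hD, mem_image]
      refine ⟨n - s, mem_range.2 (by omega), ?_⟩
      congr 1
      rw [← hsi, add_assoc, ← Nat.cast_add, Nat.add_sub_cancel' hsn.le, ZMod.natCast_self, add_zero]
    have h1 := h0 this
    rw [h1, sub_self, ZMod.val_zero] at hs
    omega
  refine ⟨s, m, hwrap, hm, fun v => ?_⟩
  rw [hD, mem_image]
  constructor
  · rintro ⟨j, hj, rfl⟩
    rw [mem_range] at hj
    have : σ (i + (j : ZMod n)) = (mkEnum hσ i0).u (s + j) := by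
      rw [mkEnum_u, Nat.cast_add, ← add_assoc, hsi]
    rw [this, (mkEnum hσ i0).cu _ (by omega)]
    omega
  · rintro ⟨h1, h2⟩
    refine ⟨(mkEnum hσ i0).c v - s, mem_range.2 (by omega), ?_⟩
    conv_rhs => rw [← (mkEnum hσ i0).uc v]
    rw [mkEnum_u, ← hsi, add_assoc, ← Nat.cast_add, Nat.add_sub_cancel' h1]

lemma main_aux {V : Type} [Fintype V] [DecidableEq V] (G : SimpleGraph V) [DecidableRel G.Adj]
    (n k : ℕ) (σ : ZMod n → V) (W : Finset V)
    (hcard : Fintype.card V = n) (hσ : IsHamOrder G n σ)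
    (hα : ∀ s : Finset V, (∀ u ∈ s, ∀ v ∈ s, u ≠ v → ¬ G.Adj u v) → s.card ≤ k)
    (hW : ¬ HasCycleThrough G (n - 1) (W : Set V))
    (r x : ℕ) (hx : 0 < x) (hk : aP (r + 1) * x ≤ k) (Ar : ArcSystem G n k σ W)
    (hsimp : Ar.Simple) (hlen : Ar.LengthGe (aP (r + 1) * x))
    (hsize : 16 ^ r * x ^ tri (r + 1) ≤ Ar.arcs.card) :
    HasIndepInArcs G Ar (x ^ (r + 1) + 1) := by
  classical
  have haP : 30 ≤ aP (r + 1) * x := by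
    have : 1 ≤ 3 ^ r := Nat.one_le_pow _ _ (by norm_num)
    have h2 : 1 * 1 ≤ 3 ^ r * x := Nat.mul_le_mul this hx
    unfold aP
    rw [pow_succ]
    nlinarith
  have hApos : 0 < Ar.arcs.card := lt_of_lt_of_le (by positivity) hsize
  obtain ⟨A0, hA0⟩ := card_pos.1 hApos
  have hne : ∀ A ∈ Ar.arcs, ∃ a, a ∈ A := by
    intro A hA
    have := hlen A hA
    exact card_pos.1 (by omega)
  have hsub : ∀ A ∈ Ar.arcs, A ⊆ Ar.cl A := fun A hA => (Ar.closure_spec A hA).2.1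
  obtain ⟨a0, ha0⟩ := hne A0 hA0
  have hkn : 2 * k < n := by
    have h1 := Ar.no_problematic A0 hA0 a0 (hsub A0 hA0 ha0)
    unfold Problematic at h1
    push Not at h1
    have := G.degree_lt_card_verts a0
    omega
  haveI : NeZero n := ⟨by omega⟩
  set good : V → Prop := fun v => ¬ Problematic G W k v with hgood
  have hno : NoCyc G k good := by
    intro l hl ⟨v, hv⟩ hg hc
    have hpos : 0 < (univ \ l.toFinset).card := card_pos.2 ⟨v, by simpa using hv⟩
    refine hno_aux k W hα (by omega) (by rw [hcard]; exact hW) ((univ \ l.toFinset).card - 1) l hl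
      (by omega) (by omega) hg
  obtain ⟨i0, m0, hcl0⟩ := (Ar.closure_spec A0 hA0).1
  have hi0 : σ i0 ∈ Ar.cl A0 := by
    have h1 := hsub A0 hA0 ha0
    rw [hcl0, mem_image] at h1
    obtain ⟨j, hj, -⟩ := h1
    rw [mem_range] at hj
    rw [hcl0, mem_image]
    exact ⟨0, mem_range.2 (by omega), by simp⟩
  set E := mkEnum hσ i0 with hE
  have hivl : ∀ A, ∃ q : ℕ × ℕ, A ∈ Ar.arcs → q.1 + q.2 ≤ n ∧ q.2 ≤ k ∧
      ∀ v, v ∈ Ar.cl A ↔ q.1 ≤ E.c v ∧ E.c v < q.1 + q.2 := by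
    intro A
    by_cases hA : A ∈ Ar.arcs
    · have h : ∃ s m : ℕ, s + m ≤ n ∧ m ≤ k ∧
          ∀ v, v ∈ Ar.cl A ↔ s ≤ E.c v ∧ E.c v < s + m := by
        by_cases hAA : A = A0
        · subst hAA
          exact arc_interval hσ hcard (by omega) i0 _ i0 m0 hcl0 (hsimp.1 A hA) (fun _ => rfl)
        · obtain ⟨i, m, hcl⟩ := (Ar.closure_spec A hA).1
          refine arc_interval hσ hcard (by omega) i0 _ i m hcl (hsimp.1 A hA) (fun h => ?_)
          exact (disjoint_left.1 (Ar.closures_disjoint A hA A0 hA0 hAA) h hi0).elim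
      obtain ⟨s, m, h⟩ := h
      exact ⟨(s, m), fun _ => h⟩
    · exact ⟨(0, 0), fun h => (hA h).elim⟩
  choose q hq using hivl
  have hch : ∀ A, ∃ t : ℕ, A ∈ Ar.arcs →
      2 * (3 ^ (r + 1) * x) ≤ (A.filter (fun a => 5 * (E.c a - (q A).1) / k = t)).card := by
    intro A
    by_cases hA : A ∈ Ar.arcs
    · obtain ⟨h1, h2, h3⟩ := hq A hA
      obtain ⟨t, -, ht⟩ := exists_le_card_fiber_of_mul_le_card_of_maps_to (s := A)
        (t := range 5) (f := fun a => 5 * (E.c a - (q A).1) / k) (n := 2 * (3 ^ (r + 1) * x)) (by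
          intro a ha
          have h4 := (h3 a).1 (hsub A hA ha)
          rw [mem_range, Nat.div_lt_iff_lt_mul (by omega)]
          omega) ⟨0, by simp⟩ (by
          have := hlen A hA
          unfold aP at this
          rw [card_range]
          refine le_trans (le_of_eq ?_) this
          ring)
      exact ⟨t, fun _ => ht⟩
    · exact ⟨0, fun h => (hA h).elim⟩
  choose t ht using hch
  set B : Finset V → Finset V := fun A =>
    A.filter (fun a => 5 * (E.c a - (q A).1) / k = t A) with hB
  have hBA : ∀ A, B A ⊆ A := fun A => filter_subset _ _
  have hBint : ∀ A ∈ Ar.arcs, ∀ a ∈ B A, (q A).1 ≤ E.c a ∧ E.c a < (q A).1 + (q A).2 :=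
    fun A hA a ha => ((hq A hA).2.2 a).1 (hsub A hA (hBA A ha))
  have F : ArcFam E k good Ar.arcs B := by
    refine ⟨?_, ?_, ?_⟩
    · intro A hA a ha a' ha' hlt
      have h1 := hBint A hA a ha
      have h2 := hBint A hA a' ha'
      have hn' := E.c_lt a'
      refine ⟨?_, hn', ?_, ?_⟩
      · by_contra hcon
        have heq : E.c a' = E.c a + 1 := by omega
        refine Ar.no_consec A hA a (hBA A ha) a' (hBA A ha') ?_ ⟨i0 + (E.c a : ZMod n), Or.inl ⟨?_, ?_⟩⟩
        · rintro rfl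
          omega
        · exact E.uc a
        · rw [add_assoc, ← Nat.cast_succ, Nat.succ_eq_add_one, ← heq]
          exact E.uc a'
      · have h3 := (mem_filter.1 ha).2
        have h4 := (mem_filter.1 ha').2
        have hk0 : 0 < k := by omega
        have h5 := Nat.div_mul_le_self (5 * (E.c a - (q A).1)) k
        have h6 := Nat.lt_div_mul_add hk0 (a := 5 * (E.c a' - (q A).1))
        rw [h3] at h5
        rw [h4] at h6
        omega
      · intro s hs1 hs2
        apply Ar.no_problematic A hA
        rw [(hq A hA).2.2, E.cu s (by omega)]
        omega
    · intro A hA A' hA' hAA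
      by_contra hcon
      rw [not_or] at hcon
      obtain ⟨hc1, hc2⟩ := hcon
      push Not at hc1 hc2
      obtain ⟨a, ha, b, hb, hab⟩ := hc1
      obtain ⟨a', ha', b', hb', hab'⟩ := hc2
      have h1 := hBint A hA a ha
      have h2 := hBint A hA a' ha'
      have h3 := hBint A' hA' b hb
      have h4 := hBint A' hA' b' hb'
      have hd := disjoint_left.1 (Ar.closures_disjoint A hA A' hA' hAA)
      have h5 := (hq A hA).1
      refine hd (a := E.u (max (q A).1 (q A').1)) ?_ ?_
      · rw [(hq A hA).2.2, E.cu _ (by omega)]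
        omega
      · rw [(hq A' hA').2.2, E.cu _ (by omega)]
        omega
    · intro A hA A' hA' hAA a ha a' ha' b hb b' hb' hab hab'
      by_contra hcon
      rw [not_or] at hcon
      have hd : ∀ y ∈ A, ∀ z ∈ A', y ≠ z := by
        rintro y hy z hz rfl
        exact disjoint_left.1 (Ar.closures_disjoint A hA A' hA' hAA) (hsub A hA hy) (hsub A' hA' hz)
      refine hsimp.2 A hA A' hA' hAA ⟨a, b, a', b', mem_union_left _ (hBA A ha),
        mem_union_right _ (hBA A' hb), mem_union_left _ (hBA A ha'),
        mem_union_right _ (hBA A' hb'), hab, hab', hcon.1, hd a (hBA A ha) b' (hBA A' hb'),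
        (hd a' (hBA A ha') b (hBA A' hb)).symm, hcon.2⟩
  obtain ⟨I, h1, h2, h3⟩ := claim hno x hx r Ar.arcs B F (fun A hA => ht A hA) hsize
  refine ⟨I, ?_, fun u hu v hv _ => h2 u hu v hv, h3⟩
  intro v hv
  obtain ⟨A, hA, hvA⟩ := h1 v hv
  exact ⟨A, hA, hBA A hvA⟩

/-- There is a constant `c > 0` such that under Assumption (★) with
constant `c`: for every integer `p ≥ 1` and every positive integer `x` with `a_p·x ≤ k`,
every simple arc-system of length at least `a_p·x` and size at least `b_p·x^(p(p−1)/2)`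
yields an independent set of size at least `x^p + 1` in `G[𝒜]`. -/
theorem statement8 :
    ∃ c : ℝ, 0 < c ∧
      ∀ (V : Type) [Fintype V] [DecidableEq V] (G : SimpleGraph V) [DecidableRel G.Adj]
        (n k : ℕ) (σ : ZMod n → V) (W : Finset V),
        StarAssumption G n k σ W c →
        ∀ p x : ℕ, 1 ≤ p → 0 < x → aP p * x ≤ k →
          ∀ 𝒜 : ArcSystem G n k σ W,
            𝒜.Simple → 𝒜.LengthGe (aP p * x) →
            bP p * x ^ (p * (p - 1) / 2) ≤ 𝒜.arcs.card →
            HasIndepInArcs G 𝒜 (x ^ p + 1) := by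
  refine ⟨1, one_pos, ?_⟩
  intro V _ _ G _ n k σ W hstar p x hp hx hk Ar hsimp hlen hsize
  obtain ⟨hcard, hσ, hα, -, hW, -⟩ := hstar
  obtain ⟨r, rfl⟩ : ∃ r, p = r + 1 := ⟨p - 1, by omega⟩
  refine main_aux G n k σ W hcard hσ hα hW r x hx hk Ar hsimp hlen (le_trans ?_ hsize)
  have h1 : (r + 1) * (r + 1 - 1) / 2 = tri (r + 1) := by
    have := two_tri r
    rw [Nat.add_sub_cancel, ← this]
    omega
  rw [h1]
  refine Nat.mul_le_mul_right _ ?_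
  unfold bP
  calc 16 ^ r ≤ 1000 ^ r := Nat.pow_le_pow_left (by norm_num) r
    _ ≤ 1000 ^ (r + 1) := Nat.pow_le_pow_right (by norm_num) (by omega)
    _ = 1000 ^ (r + 1) * 1 := (mul_one _).symm
    _ ≤ _ := Nat.mul_le_mul_left _ (Nat.one_le_pow _ _ (by norm_num))
end

section
/- There exists a constant c > 0 such that the following holds. Suppose G, H, W, k, n satisfy Assumption (★) with constant c. Let p > 1 be an integer and x a positive integer, and let 𝒜 be a simple arc-system in G of size b_p·x^{p(p−1)/2} and length a_p·x. Then either G[𝒜] contains an independent set of size x^p + 1, or there is a non-empty subfamily 𝒜' ⊆ 𝒜 such that every arc A ∈ 𝒜' is good in 𝒜'. -/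
open Finset

/-- Arc `A` is good (with parameters `p`, `x`) in the family `arcsSet`: to at least half of
the vertices `v` of `A` one can assign pairwise disjoint sets `F v` of
`4·b_{p−1}·x^((p−1)(p−2)/2)` arcs of the family, each containing a `G`-neighbour of `v`. -/
def GoodArc {V : Type} [Fintype V] [DecidableEq V] (G : SimpleGraph V) [DecidableRel G.Adj]
    (arcsSet : Finset (Finset V)) (p x : ℕ) (A : Finset V) : Prop :=
  ∃ (S : Finset V) (F : V → Finset (Finset V)), S ⊆ A ∧ A.card ≤ 2 * S.card ∧
    (∀ v ∈ S, F v ⊆ arcsSet ∧ (F v).card = 4 * bP (p - 1) * x ^ ((p - 1) * (p - 2) / 2) ∧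
      ∀ B ∈ F v, ∃ b ∈ B, G.Adj v b) ∧
    ∀ u ∈ S, ∀ v ∈ S, u ≠ v → Disjoint (F u) (F v)

/-- In an `M₂`-free set one can delete at most two vertices to make it independent. -/
lemma m2free_indep {V : Type} [DecidableEq V] (G : SimpleGraph V) (A : Finset V)
    (h : M2Free G A) :
    ∃ T : Finset V, T.card ≤ 2 ∧ ∀ u ∈ A, ∀ v ∈ A, u ∉ T → v ∉ T → ¬ G.Adj u v := by
  by_cases hE : ∃ a ∈ A, ∃ b ∈ A, G.Adj a b
  · obtain ⟨a, ha, b, hb, hab⟩ := hE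
    refine ⟨{a, b}, Finset.card_le_two, ?_⟩
    intro u hu v hv hu' hv' huv
    simp only [Finset.mem_insert, Finset.mem_singleton, not_or] at hu' hv'
    exact h ⟨u, v, a, b, hu, hv, ha, hb, huv, hab, hu'.1, hu'.2, hv'.1, hv'.2⟩
  · refine ⟨∅, by simp, ?_⟩
    intro u hu v hv _ _ huv
    exact hE ⟨u, hu, v, hv, huv⟩

/-- The edges between two disjoint sets with `M₂`-free union form a star. -/
lemma m2free_star {V : Type} [DecidableEq V] (G : SimpleGraph V) (A D : Finset V)
    (hd : Disjoint A D) (h : M2Free G (A ∪ D)) (v0 : V) :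
    ∃ z : V, ∀ a ∈ A, ∀ d ∈ D, G.Adj a d → a = z ∨ d = z := by
  have key : ∀ a ∈ A, ∀ d ∈ D, G.Adj a d → ∀ a' ∈ A, ∀ d' ∈ D, G.Adj a' d' →
      a = a' ∨ d = d' := by
    intro a ha d hdd hadj a' ha' d' hd' hadj'
    by_contra hc
    push Not at hc
    refine h ⟨a, d, a', d', by simp [ha], by simp [hdd], by simp [ha'], by simp [hd'],
      hadj, hadj', hc.1, ?_, ?_, hc.2⟩
    · rintro rfl
      exact Finset.disjoint_left.1 hd ha hd'
    · rintro rfl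
      exact Finset.disjoint_left.1 hd ha' hdd
  by_cases hE : ∃ a ∈ A, ∃ d ∈ D, G.Adj a d
  · obtain ⟨a, ha, d, hdd, hadj⟩ := hE
    by_cases h2 : ∃ a' ∈ A, ∃ d' ∈ D, G.Adj a' d' ∧ a' ≠ a
    · obtain ⟨a', ha', d', hd', hadj', hne⟩ := h2
      refine ⟨d, ?_⟩
      intro u hu w hw huw
      have h1 := key a ha d hdd hadj a' ha' d' hd' hadj'
      have h3 := key a ha d hdd hadj u hu w hw huw
      have h4 := key a' ha' d' hd' hadj' u hu w hw huw
      grind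
    · refine ⟨a, ?_⟩
      intro u hu w hw huw
      left
      by_contra hne
      exact h2 ⟨u, hu, w, hw, huw, hne⟩
  · refine ⟨v0, ?_⟩
    intro u hu w hw huw
    exact absurd ⟨u, hu, w, hw, huw⟩ hE

/-- What failure of goodness gives: a large part `B` of `A`, and a small exceptional
family `U`, such that every vertex of `B` sees few arcs outside `U`. -/
lemma not_good_struct {V : Type} [Fintype V] [DecidableEq V] (G : SimpleGraph V)
    [DecidableRel G.Adj] (F0 : Finset (Finset V)) (p x q : ℕ)
    (hq : q = 4 * bP (p - 1) * x ^ ((p - 1) * (p - 2) / 2)) (A : Finset V)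
    (hbad : ¬ GoodArc G F0 p x A) :
    ∃ (B : Finset V) (U : Finset (Finset V)), B ⊆ A ∧ A.card ≤ 2 * B.card ∧
      U.card ≤ q * B.card ∧
      ∀ v ∈ B, (F0.filter (fun D => D ∉ U ∧ ∃ b ∈ D, G.Adj v b)).card ≤ q := by
  classical
  let P : Finset V → Prop := fun S => ∃ F : V → Finset (Finset V),
    (∀ v ∈ S, F v ⊆ F0 ∧ (F v).card = q ∧ ∀ B ∈ F v, ∃ b ∈ B, G.Adj v b) ∧
    ∀ u ∈ S, ∀ v ∈ S, u ≠ v → Disjoint (F u) (F v)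
  have hne : (A.powerset.filter P).Nonempty :=
    ⟨∅, by
      simp only [Finset.mem_filter, Finset.mem_powerset, Finset.empty_subset, true_and]
      exact ⟨fun _ => ∅, by simp, by simp⟩⟩
  obtain ⟨S, hS, hmax⟩ := Finset.exists_max_image _ Finset.card hne
  simp only [Finset.mem_filter, Finset.mem_powerset] at hS hmax
  obtain ⟨hSA, F, hF1, hF2⟩ := hS
  have hlt : 2 * S.card < A.card := by
    by_contra hc
    push Not at hc
    exact hbad ⟨S, F, hSA, hc, by rw [← hq]; exact hF1, hF2⟩
  have hcard : (A \ S).card = A.card - S.card := Finset.card_sdiff_of_subset hSA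
  refine ⟨A \ S, S.biUnion F, Finset.sdiff_subset, by omega, ?_, ?_⟩
  · have h1 : (S.biUnion F).card ≤ S.card * q :=
      Finset.card_biUnion_le_card_mul _ _ _ (fun v hv => (hF1 v hv).2.1.le)
    have h2 : S.card * q ≤ q * (A \ S).card := by
      rw [mul_comm]
      exact Nat.mul_le_mul_left _ (by omega)
    exact h1.trans h2
  · intro v hv
    by_contra hc
    push Not at hc
    obtain ⟨E, hE, hEc⟩ := Finset.exists_subset_card_eq hc.le
    have hvA := (Finset.mem_sdiff.1 hv).1
    have hvS := (Finset.mem_sdiff.1 hv).2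
    have hEprop : ∀ D ∈ E, D ∈ F0 ∧ D ∉ S.biUnion F ∧ ∃ b ∈ D, G.Adj v b := by
      intro D hD
      have := hE hD
      simpa only [Finset.mem_filter] using this
    have hdis : ∀ u ∈ S, Disjoint (F u) E := by
      intro u hu
      rw [Finset.disjoint_left]
      intro D hD hDE
      exact (hEprop D hDE).2.1 (Finset.mem_biUnion.2 ⟨u, hu, hD⟩)
    have hnew := hmax (insert v S) ⟨Finset.insert_subset hvA hSA, Function.update F v E, ?_, ?_⟩
    · rw [Finset.card_insert_of_notMem hvS] at hnew
      omega
    · intro u hu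
      by_cases huv : u = v
      · subst huv
        simp only [Function.update_self]
        exact ⟨fun D hD => (hEprop D hD).1, hEc, fun D hD => (hEprop D hD).2.2⟩
      · rw [Function.update_of_ne huv]
        exact hF1 u (Finset.mem_of_mem_insert_of_ne hu huv)
    · intro u hu w hw huw
      by_cases h1 : u = v
      · subst h1
        have hw' := Finset.mem_of_mem_insert_of_ne hw (Ne.symm huw)
        rw [Function.update_self, Function.update_of_ne (Ne.symm huw)]
        exact (hdis w hw').symm
      · have hu' := Finset.mem_of_mem_insert_of_ne hu h1
        rw [Function.update_of_ne h1]
        by_cases h2 : w = v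
        · subst h2
          rw [Function.update_self]
          exact hdis u hu'
        · rw [Function.update_of_ne h2]
          exact hF2 u hu' w (Finset.mem_of_mem_insert_of_ne hw h2) huw

/-- Greedy colouring: the classes carry independent sets of large total size. -/
lemma greedy {V : Type} [Fintype V] [DecidableEq V] (G : SimpleGraph V) [DecidableRel G.Adj]
    (arcs : Finset (Finset V)) (q t : ℕ) (hq : 0 < q)
    (hdisj : ∀ A ∈ arcs, ∀ B ∈ arcs, A ≠ B → Disjoint A B)
    (hm1 : ∀ A ∈ arcs, M2Free G A)
    (hm2 : ∀ A ∈ arcs, ∀ B ∈ arcs, A ≠ B → M2Free G (A ∪ B))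
    (hlen : ∀ A ∈ arcs, 4 * (t + 2) ≤ A.card)
    (hbad : ∀ F0 ⊆ arcs, F0.Nonempty → ∃ A ∈ F0, ∃ (B : Finset V) (U : Finset (Finset V)),
      B ⊆ A ∧ A.card ≤ 2 * B.card ∧ U.card ≤ q * B.card ∧
      ∀ v ∈ B, (F0.filter (fun D => D ∉ U ∧ ∃ b ∈ D, G.Adj v b)).card ≤ q) :
    ∀ N : ℕ, ∀ F0 ⊆ arcs, F0.card = N →
      ∃ (f : Finset V → Fin (4 * q)) (I : Fin (4 * q) → Finset V),
        (∀ c, ∀ v ∈ I c, ∃ D ∈ F0, f D = c ∧ v ∈ D) ∧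
        (∀ c, ∀ u ∈ I c, ∀ v ∈ I c, ¬ G.Adj u v) ∧
        N * t ≤ ∑ c, (I c).card := by
  classical
  intro N
  induction N with
  | zero =>
    intro F0 _ _
    exact ⟨fun _ => ⟨0, by omega⟩, fun _ => ∅, by simp, by simp, by simp⟩
  | succ N ih =>
    intro F0 hF0 hcard
    have hne : F0.Nonempty := by
      rw [← Finset.card_pos]; omega
    obtain ⟨A, hA, B, U, hBA, hAB, hU, hdeg⟩ := hbad F0 hF0 hne
    obtain ⟨f, I, hI1, hI2, hI3⟩ := ih (F0.erase A) ((Finset.erase_subset _ _).trans hF0)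
      (by rw [Finset.card_erase_of_mem hA]; omega)
    have hAarcs := hF0 hA
    have hlA := hlen A hAarcs
    have hV : Nonempty V := by
      have : A.Nonempty := by rw [← Finset.card_pos]; omega
      exact ⟨this.choose⟩
    obtain ⟨v0⟩ := hV
    have hstar : ∀ D : Finset V, ∃ z : V, D ∈ arcs → D ≠ A →
        ∀ a ∈ A, ∀ d ∈ D, G.Adj a d → a = z ∨ d = z := by
      intro D
      by_cases h : D ∈ arcs ∧ D ≠ A
      · obtain ⟨z, hz⟩ := m2free_star G A D (hdisj A hAarcs D h.1 h.2.symm)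
          (hm2 A hAarcs D h.1 h.2.symm) v0
        exact ⟨z, fun _ _ => hz⟩
      · exact ⟨v0, fun h1 h2 => absurd ⟨h1, h2⟩ h⟩
    choose z hz using hstar
    obtain ⟨T, hT2, hT⟩ := m2free_indep G A (hm1 A hAarcs)
    let Nb : V → Finset (Finset V) := fun v =>
      F0.filter (fun D => D ∉ U ∧ ∃ b ∈ D, G.Adj v b)
    let w : Fin (4 * q) → ℕ := fun c => (U.filter (fun D => f D = c)).card +
      ∑ v ∈ B, ((Nb v).filter (fun D => f D = c)).card
    have hsum : ∑ c, w c ≤ 2 * q * B.card := by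
      have e1 : ∑ c, (U.filter (fun D => f D = c)).card = U.card :=
        (Finset.card_eq_sum_card_fiberwise (fun _ _ => Finset.mem_coe.2 (Finset.mem_univ _))).symm
      have e2 : ∀ v, ∑ c, ((Nb v).filter (fun D => f D = c)).card = (Nb v).card := fun v =>
        (Finset.card_eq_sum_card_fiberwise (fun _ _ => Finset.mem_coe.2 (Finset.mem_univ _))).symm
      have e3 : ∑ v ∈ B, (Nb v).card ≤ B.card * q := by
        rw [← smul_eq_mul]
        exact Finset.sum_le_card_nsmul _ _ _ hdeg
      simp only [w]
      rw [Finset.sum_add_distrib, e1, Finset.sum_comm]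
      simp only [e2]
      nlinarith
    obtain ⟨c, hc⟩ : ∃ c, 2 * w c ≤ B.card := by
      by_contra hcon
      push Not at hcon
      have h1 : ∑ _c : Fin (4 * q), (B.card + 1) ≤ ∑ c, 2 * w c :=
        Finset.sum_le_sum (fun c _ => hcon c)
      rw [← Finset.mul_sum] at h1
      simp only [Finset.sum_const, Finset.card_univ, Fintype.card_fin, smul_eq_mul] at h1
      nlinarith
    let Z : Finset V := (U.filter (fun D => f D = c)).image z
    let X : Finset V := B.filter (fun v => ((Nb v).filter (fun D => f D = c)).Nonempty)
    have hZ : Z.card ≤ (U.filter (fun D => f D = c)).card := Finset.card_image_le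
    have hX : X.card ≤ ∑ v ∈ B, ((Nb v).filter (fun D => f D = c)).card := by
      simp only [X]
      rw [Finset.card_filter]
      apply Finset.sum_le_sum
      intro v _
      split_ifs with h
      · exact Finset.card_pos.2 h
      · exact Nat.zero_le _
    have hIB : Disjoint (I c) B := by
      rw [Finset.disjoint_left]
      intro v hv hvB
      obtain ⟨D, hD, _, hvD⟩ := hI1 c v hv
      have hDne := Finset.ne_of_mem_erase hD
      exact Finset.disjoint_left.1
        (hdisj D (hF0 (Finset.mem_of_mem_erase hD)) A hAarcs hDne) hvD (hBA hvB)
    let J : Finset V := (I c ∪ B) \ (T ∪ X ∪ Z)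
    have hJcard : (I c).card + t ≤ J.card := by
      have h1 : (I c ∪ B).card - (T ∪ X ∪ Z).card ≤ J.card := Finset.le_card_sdiff _ _
      have h2 : (T ∪ X ∪ Z).card ≤ T.card + X.card + Z.card :=
        (Finset.card_union_le _ _).trans (Nat.add_le_add_right (Finset.card_union_le _ _) _)
      rw [Finset.card_union_of_disjoint hIB] at h1
      have h3 : w c = (U.filter (fun D => f D = c)).card +
        ∑ v ∈ B, ((Nb v).filter (fun D => f D = c)).card := rfl
      omega
    have hcross : ∀ u ∈ J, ∀ v ∈ J, u ∈ B → v ∈ I c → ¬ G.Adj u v := by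
      intro u hu v hv huB hvI hadj
      simp only [J, Finset.mem_sdiff, Finset.mem_union, not_or] at hu hv
      obtain ⟨D, hD, hfD, hvD⟩ := hI1 c v hvI
      have hDne := Finset.ne_of_mem_erase hD
      have hDF := Finset.mem_of_mem_erase hD
      by_cases hDU : D ∈ U
      · have hzZ : z D ∈ Z :=
          Finset.mem_image_of_mem _ (Finset.mem_filter.2 ⟨hDU, hfD⟩)
        rcases hz D (hF0 hDF) hDne u (hBA huB) v hvD hadj with h | h
        · exact hu.2.2 (h ▸ hzZ)
        · exact hv.2.2 (h ▸ hzZ)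
      · refine hu.2.1.2 (Finset.mem_filter.2 ⟨huB, D, ?_⟩)
        exact Finset.mem_filter.2 ⟨Finset.mem_filter.2 ⟨hDF, hDU, v, hvD, hadj⟩, hfD⟩
    refine ⟨Function.update f A c, Function.update I c J, ?_, ?_, ?_⟩
    · have hold : ∀ c', ∀ v ∈ I c', ∃ D ∈ F0, Function.update f A c D = c' ∧ v ∈ D := by
        intro c' v hv
        obtain ⟨D, hD, hfD, hvD⟩ := hI1 c' v hv
        refine ⟨D, Finset.mem_of_mem_erase hD, ?_, hvD⟩
        rw [Function.update_of_ne (Finset.ne_of_mem_erase hD)]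
        exact hfD
      intro c' v hv
      by_cases hcc : c' = c
      · subst hcc
        rw [Function.update_self] at hv
        rcases Finset.mem_union.1 (Finset.mem_sdiff.1 hv).1 with h | h
        · exact hold _ v h
        · exact ⟨A, hA, by simp, hBA h⟩
      · rw [Function.update_of_ne hcc] at hv
        exact hold _ v hv
    · intro c' u hu v hv
      by_cases hcc : c' = c
      · subst hcc
        rw [Function.update_self] at hu hv
        rcases Finset.mem_union.1 (Finset.mem_sdiff.1 hu).1 with h | h <;>
          rcases Finset.mem_union.1 (Finset.mem_sdiff.1 hv).1 with h' | h'
        · exact hI2 _ u h v h'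
        · exact fun hadj => hcross v hv u hu h' h hadj.symm
        · exact hcross u hu v hv h h'
        · simp only [J, Finset.mem_sdiff, Finset.mem_union, not_or] at hu hv
          exact hT u (hBA h) v (hBA h') hu.2.1.1 hv.2.1.1
      · rw [Function.update_of_ne hcc] at hu hv
        exact hI2 _ u hu v hv
    · have e1 : ∑ c', (I c').card = (I c).card + ∑ c' ∈ Finset.univ.erase c, (I c').card :=
        (Finset.add_sum_erase _ _ (Finset.mem_univ c)).symm
      have e2 : ∑ c', (Function.update I c J c').card =
          (Function.update I c J c).card +
            ∑ c' ∈ Finset.univ.erase c, (Function.update I c J c').card :=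
        (Finset.add_sum_erase _ _ (Finset.mem_univ c)).symm
      have e3 : ∑ c' ∈ Finset.univ.erase c, (Function.update I c J c').card =
          ∑ c' ∈ Finset.univ.erase c, (I c').card := by
        apply Finset.sum_congr rfl
        intro c' hc'
        rw [Function.update_of_ne (Finset.ne_of_mem_erase hc')]
      rw [e2, e3, Function.update_self]
      rw [e1] at hI3
      have : (N + 1) * t = N * t + t := by ring
      omega

/-- The numerical relation between `b_p` and `b_{p-1}`. -/
lemma size_eq (p x : ℕ) (hp : 1 < p) :
    bP p * x ^ (p * (p - 1) / 2) =
      (4 * bP (p - 1) * x ^ ((p - 1) * (p - 2) / 2)) * (1000 * 16 ^ (p - 1) * x ^ (p - 1)) := by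
  obtain ⟨s, rfl⟩ : ∃ s, p = s + 2 := ⟨p - 2, by omega⟩
  have e1 : s + 2 - 1 = s + 1 := by omega
  have e2 : s + 2 - 2 = s := by omega
  rw [e1, e2]
  have e3 : (s + 2) * (s + 1) / 2 = (s + 1) * s / 2 + (s + 1) := by
    have : (s + 2) * (s + 1) = (s + 1) * s + (s + 1) * 2 := by ring
    rw [this, Nat.add_mul_div_right _ _ (by norm_num)]
  rw [e3, pow_add x]
  have e4 : (16 : ℕ) ^ (s + 1) = 4 ^ (2 * (s + 1)) := by
    rw [pow_mul]
    norm_num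
  unfold bP
  have e5 : (4 : ℕ) ^ ((s + 2) ^ 2) = 4 * 4 ^ ((s + 1) ^ 2) * 4 ^ (2 * (s + 1)) := by
    rw [← pow_succ', ← pow_add]
    congr 1
    ring
  rw [e4, e5, pow_succ 1000 (s + 1)]
  ring

/-- There is a constant `c > 0` such that under Assumption (★) with
constant `c`: for every integer `p > 1` and positive integer `x`, every simple arc-system of
size `b_p·x^(p(p−1)/2)` and length `a_p·x` either yields an independent set of size
`x^p + 1` in `G[𝒜]`, or contains a non-empty subfamily `𝒜'` all of whose arcs are good
in `𝒜'`. -/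
theorem statement11 :
    ∃ c : ℝ, 0 < c ∧
      ∀ (V : Type) [Fintype V] [DecidableEq V] (G : SimpleGraph V) [DecidableRel G.Adj]
        (n k : ℕ) (σ : ZMod n → V) (W : Finset V),
        StarAssumption G n k σ W c →
        ∀ p x : ℕ, 1 < p → 0 < x →
          ∀ 𝒜 : ArcSystem G n k σ W,
            𝒜.Simple →
            𝒜.arcs.card = bP p * x ^ (p * (p - 1) / 2) →
            (∀ A ∈ 𝒜.arcs, aP p * x ≤ A.card) →
            (∃ A ∈ 𝒜.arcs, A.card = aP p * x) →
            HasIndepInArcs G 𝒜 (x ^ p + 1) ∨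
              ∃ arcs' ⊆ 𝒜.arcs, arcs'.Nonempty ∧
                ∀ A ∈ arcs', GoodArc G arcs' p x A := by
  classical
  refine ⟨1, one_pos, ?_⟩
  intro V _ _ G _ n k σ W _ p x hp hx 𝒜 hsimple hsize hlen _
  by_contra hcon
  push Not at hcon
  obtain ⟨hnoind, hnogood⟩ := hcon
  obtain ⟨q, hq⟩ : ∃ q, q = 4 * bP (p - 1) * x ^ ((p - 1) * (p - 2) / 2) := ⟨_, rfl⟩
  have hq0 : 0 < q := by
    rw [hq]
    unfold bP
    positivity
  have hN : 𝒜.arcs.card = q * (1000 * 16 ^ (p - 1) * x ^ (p - 1)) := by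
    rw [hsize, hq, size_eq p x hp]
  have hx1 : 0 < x ^ (p - 1) := pow_pos hx _
  have h16 : 0 < 16 ^ (p - 1) := by positivity
  have hfac : 1000 * x ^ (p - 1) ≤ 1000 * 16 ^ (p - 1) * x ^ (p - 1) :=
    Nat.mul_le_mul_right _ (by omega)
  have hN2 : q * (1000 * x ^ (p - 1)) ≤ 𝒜.arcs.card := by
    rw [hN]
    exact Nat.mul_le_mul_left _ hfac
  have hN1 : 1 < 𝒜.arcs.card := by
    refine lt_of_lt_of_le ?_ hN2
    nlinarith
  have hsub : ∀ A ∈ 𝒜.arcs, A ⊆ 𝒜.cl A := fun A hA => (𝒜.closure_spec A hA).2.1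
  have hm1 : ∀ A ∈ 𝒜.arcs, M2Free G A := by
    intro A hA
    obtain ⟨B, hB, hBA⟩ := Finset.exists_mem_ne hN1 A
    rintro ⟨a, b, c, d, ha, hb, hc, hd, h⟩
    exact hsimple.2 A hA B hB hBA.symm
      ⟨a, b, c, d, by simp [ha], by simp [hb], by simp [hc], by simp [hd], h⟩
  obtain ⟨f, I, hI1, hI2, hI3⟩ := greedy G 𝒜.arcs q (20 * x) hq0
    (fun A hA B hB hAB => Finset.disjoint_of_subset_left (hsub A hA)
      (Finset.disjoint_of_subset_right (hsub B hB) (𝒜.closures_disjoint A hA B hB hAB)))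
    hm1 hsimple.2
    (by
      intro A hA
      refine le_trans ?_ (hlen A hA)
      unfold aP
      have h3 : 3 ^ 2 ≤ 3 ^ p := Nat.pow_le_pow_right (by norm_num) hp
      have h4 : 90 ≤ 10 * 3 ^ p := by omega
      have h5 := Nat.mul_le_mul_right x h4
      omega)
    (by
      intro F0 hF0 hne
      obtain ⟨A, hA, hAbad⟩ := hnogood F0 hF0 hne
      exact ⟨A, hA, not_good_struct G F0 p x q hq A hAbad⟩)
    𝒜.arcs.card 𝒜.arcs (Finset.Subset.refl _) rfl
  have hsmall : ∀ c, (I c).card ≤ x ^ p := by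
    intro c
    by_contra hc
    push Not at hc
    refine hnoind ⟨I c, ?_, fun u hu v hv _ => hI2 c u hu v hv, hc⟩
    intro v hv
    obtain ⟨D, hD, _, hvD⟩ := hI1 c v hv
    exact ⟨D, hD, hvD⟩
  have htot : ∑ c, (I c).card ≤ 4 * q * x ^ p := by
    have := Finset.sum_le_card_nsmul Finset.univ (fun c => (I c).card) (x ^ p)
      (fun c _ => hsmall c)
    simpa using this
  have hxp : x ^ p = x ^ (p - 1) * x := by
    rw [← pow_succ]
    congr 1
    omega
  have h1 := (Nat.mul_le_mul_right (20 * x) hN2).trans (hI3.trans htot)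
  rw [hxp] at h1
  have hpos : 0 < q * (x ^ (p - 1) * x) := by positivity
  nlinarith
end
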